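/- There exists a constant C > 0 such that for every squared Horton set H of n points, every point of H is a vertex of at most C·n empty triangles of H. -/

import Mathlib

open scoped Classical

noncomputable section

/-- Euclidean distance between two points of the plane `ℝ × ℝ`. -/
def elen (p q : ℝ × ℝ) : ℝ := Real.sqrt ((p.1 - q.1) ^ 2 + (p.2 - q.2) ^ 2)

/-- Orientation determinant of an ordered triple of points. -/
def orient (a b c : ℝ × ℝ) : ℝ :=
  (b.1 - a.1) * (c.2 - a.2) - (b.2 - a.2) * (c.1 - a.1)

/-- A planar point set is in general position if no three distinct points are collinear. -/
def GeneralPosition (S : Set (ℝ × ℝ)) : Prop :=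
  ∀ a ∈ S, ∀ b ∈ S, ∀ c ∈ S, a ≠ b → a ≠ c → b ≠ c →
    ¬ Collinear ℝ ({a, b, c} : Set (ℝ × ℝ))

/-- No two points of `S` share an `x`-coordinate. -/
def DistinctX (S : Set (ℝ × ℝ)) : Prop :=
  ∀ a ∈ S, ∀ b ∈ S, a ≠ b → a.1 ≠ b.1

/-- `p` lies strictly below the (non-vertical) line through `a` and `b`, where `a.1 < b.1`. -/
def StrictlyBelow (p a b : ℝ × ℝ) : Prop :=
  (b.1 - a.1) * (p.2 - a.2) < (b.2 - a.2) * (p.1 - a.1)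

/-- `p` lies strictly above the (non-vertical) line through `a` and `b`, where `a.1 < b.1`. -/
def StrictlyAbove (p a b : ℝ × ℝ) : Prop :=
  (b.2 - a.2) * (p.1 - a.1) < (b.1 - a.1) * (p.2 - a.2)

/-- `Y` is high above `X`: every line through two points of `Y` is above every point of `X`. -/
def HighAbove (Y X : Set (ℝ × ℝ)) : Prop :=
  ∀ a ∈ Y, ∀ b ∈ Y, a.1 < b.1 → ∀ p ∈ X, StrictlyBelow p a b

/-- `X` is deep below `Y`: every line through two points of `X` is below every point of `Y`. -/
def DeepBelow (X Y : Set (ℝ × ℝ)) : Prop :=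
  ∀ a ∈ X, ∀ b ∈ X, a.1 < b.1 → ∀ p ∈ Y, StrictlyAbove p a b

/-- The even-indexed points of `H` in increasing order of `x`-coordinate (`H₀`). -/
def evenPart (H : Finset (ℝ × ℝ)) : Finset (ℝ × ℝ) :=
  H.filter fun p => Even (H.filter fun q => q.1 < p.1).card

/-- The odd-indexed points of `H` in increasing order of `x`-coordinate (`H₁`). -/
def oddPart (H : Finset (ℝ × ℝ)) : Finset (ℝ × ℝ) :=
  H.filter fun p => ¬ Even (H.filter fun q => q.1 < p.1).card

/-- Horton sets. -/
inductive IsHorton : Finset (ℝ × ℝ) → Prop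
  | small (H : Finset (ℝ × ℝ)) (hgp : GeneralPosition ↑H) (hx : DistinctX ↑H)
      (hcard : H.card ≤ 2) : IsHorton H
  | split (H : Finset (ℝ × ℝ)) (hgp : GeneralPosition ↑H) (hx : DistinctX ↑H)
      (hcard : 2 < H.card) (h0 : IsHorton (evenPart H)) (h1 : IsHorton (oddPart H))
      (hhigh : HighAbove ↑(oddPart H) ↑(evenPart H))
      (hdeep : DeepBelow ↑(evenPart H) ↑(oddPart H)) : IsHorton H

/-- `t` is an empty triangle of the point set `S`: a three-element non-collinear subset of `S`
whose open interior contains no point of `S`. -/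
def IsEmptyTriangleOf (S : Set (ℝ × ℝ)) (t : Finset (ℝ × ℝ)) : Prop :=
  t.card = 3 ∧ (↑t : Set (ℝ × ℝ)) ⊆ S ∧ ¬ Collinear ℝ (↑t : Set (ℝ × ℝ)) ∧
    ∀ p ∈ S, p ∉ interior (convexHull ℝ (↑t : Set (ℝ × ℝ)))

/-- `τ S`: the number of empty triangles of `S`. -/
def tau (S : Set (ℝ × ℝ)) : ℕ :=
  {t : Finset (ℝ × ℝ) | IsEmptyTriangleOf S t}.ncard

/-- The number of empty triangles of `S` stabbed by the point `q`. -/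
def stabbedCount (S : Set (ℝ × ℝ)) (q : ℝ × ℝ) : ℕ :=
  {t : Finset (ℝ × ℝ) | IsEmptyTriangleOf S t ∧
    q ∈ interior (convexHull ℝ (↑t : Set (ℝ × ℝ)))}.ncard

/-- The number of empty triangles of `S` having `q` as a vertex. -/
def incidentCount (S : Set (ℝ × ℝ)) (q : ℝ × ℝ) : ℕ :=
  {t : Finset (ℝ × ℝ) | IsEmptyTriangleOf S t ∧ q ∈ t}.ncard

/-- The `m × m` integer grid `{1,…,m} × {1,…,m}`, viewed inside `ℝ × ℝ`. -/
def grid (m : ℕ) : Finset (ℝ × ℝ) :=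
  (Finset.Icc 1 m ×ˢ Finset.Icc 1 m).image fun p => ((p.1 : ℝ), (p.2 : ℝ))

/-- The points of the grid on the line spanned by `a` and `b`. -/
def gridLine (m : ℕ) (a b : ℝ × ℝ) : Finset (ℝ × ℝ) :=
  (grid m).filter fun x => Collinear ℝ ({a, b, x} : Set (ℝ × ℝ))

/-- Rotation of the plane by (minus) 90 degrees. -/
def rotCW (p : ℝ × ℝ) : ℝ × ℝ := (p.2, -p.1)

/-- `f` is an `ε`-perturbation of the grid `{1,…,m} × {1,…,m}` turning it into a
squared Horton set (of `m ^ 2` points). -/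
structure IsSquaredHorton (m : ℕ) (ε : ℝ) (f : ℝ × ℝ → ℝ × ℝ) : Prop where
  eps_pos : 0 < ε
  eps_lt : ε < 1 / 4
  inj : Set.InjOn f ↑(grid m)
  close : ∀ p ∈ grid m, elen (f p) p ≤ ε
  orient_iff : ∀ a ∈ grid m, ∀ b ∈ grid m, ∀ c ∈ grid m,
    orient a b c ≠ 0 → (0 < orient a b c ↔ 0 < orient (f a) (f b) (f c))
  nonvertical : ∀ a ∈ grid m, ∀ b ∈ grid m, a ≠ b → a.1 ≠ b.1 →
    IsHorton ((gridLine m a b).image f)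
  vertical : ∀ a ∈ grid m, ∀ b ∈ grid m, a ≠ b → a.1 = b.1 →
    IsHorton (((gridLine m a b).image f).image rotCW)

/-- strict interior of a triangle through orientations -/
def RT (a b c x : ℝ × ℝ) : Prop :=
  (0 < orient a b x ∧ 0 < orient b c x ∧ 0 < orient c a x) ∨
  (orient a b x < 0 ∧ orient b c x < 0 ∧ orient c a x < 0)

lemma orient_rot (a b c : ℝ × ℝ) : orient b c a = orient a b c := by
  unfold orient; ring

lemma orient_swap (a b c : ℝ × ℝ) : orient b a c = - orient a b c := by
  unfold orient; ring

lemma orient_swap2 (a b c : ℝ × ℝ) : orient a c b = - orient a b c := by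
  unfold orient; ring

lemma RT_rot {a b c x : ℝ × ℝ} (h : RT a b c x) : RT b c a x := by
  unfold RT at *; tauto

lemma RT_swap {a b c x : ℝ × ℝ} (h : RT a b c x) : RT b a c x := by
  unfold RT at *
  rw [orient_swap a b x, orient_swap c a x, orient_swap b c x]
  rcases h with ⟨h1, h2, h3⟩ | ⟨h1, h2, h3⟩
  · right; refine ⟨?_, ?_, ?_⟩ <;> linarith
  · left; refine ⟨?_, ?_, ?_⟩ <;> linarith

def Bt3 (a c b : ℝ × ℝ) : Prop := (a.1 < c.1 ∧ c.1 < b.1) ∨ (b.1 < c.1 ∧ c.1 < a.1)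

def Vis (H : Finset (ℝ × ℝ)) (a b : ℝ × ℝ) : Prop :=
  (∀ c ∈ H, Bt3 a c b → orient a b c ≤ 0) ∨ (∀ c ∈ H, Bt3 a c b → 0 ≤ orient a b c)

structure Spl (H X Y : Finset (ℝ × ℝ)) (s : ℝ) : Prop where
  hs : s = 1 ∨ s = -1
  hX : X ⊆ H
  hY : Y ⊆ H
  cov : ∀ x ∈ H, x ∈ X ∨ x ∈ Y
  dx : DistinctX ↑H
  altX : ∀ x ∈ X, ∀ y ∈ X, x.1 < y.1 → ∃ c ∈ Y, x.1 < c.1 ∧ c.1 < y.1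
  altY : ∀ x ∈ Y, ∀ y ∈ Y, x.1 < y.1 → ∃ c ∈ X, x.1 < c.1 ∧ c.1 < y.1
  sx : ∀ a ∈ X, ∀ b ∈ X, a.1 < b.1 → ∀ p ∈ Y, 0 < s * orient a b p
  sy : ∀ a ∈ Y, ∀ b ∈ Y, a.1 < b.1 → ∀ p ∈ X, s * orient a b p < 0

lemma Spl.symm {H X Y : Finset (ℝ × ℝ)} {s : ℝ} (h : Spl H X Y s) : Spl H Y X (-s) where
  hs := by rcases h.hs with h | h <;> simp [h]
  hX := h.hY
  hY := h.hX
  cov := fun x hx => (h.cov x hx).symm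
  dx := h.dx
  altX := h.altY
  altY := h.altX
  sx := fun a ha b hb hab p hp => by have := h.sy a ha b hb hab p hp; linarith
  sy := fun a ha b hb hab p hp => by have := h.sx a ha b hb hab p hp; linarith

def rk (H : Finset (ℝ × ℝ)) (p : ℝ × ℝ) : ℕ := (H.filter fun q => q.1 < p.1).card

lemma rk_lt {H : Finset (ℝ × ℝ)} {x y : ℝ × ℝ} (hx : x ∈ H) (h : x.1 < y.1) :
    rk H x < rk H y := by
  apply Finset.card_lt_card
  rw [Finset.ssubset_iff_of_subset]
  · exact ⟨x, by simp [hx, h], by simp⟩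
  · intro z hz
    simp only [Finset.mem_filter] at *
    exact ⟨hz.1, hz.2.trans h⟩

lemma rk_inj {H : Finset (ℝ × ℝ)} (hd : DistinctX ↑H) {x y : ℝ × ℝ} (hx : x ∈ H) (hy : y ∈ H)
    (h : rk H x = rk H y) : x = y := by
  by_contra hne
  rcases lt_or_gt_of_ne (hd x hx y hy hne) with h1 | h1
  · have := rk_lt hx h1; omega
  · have := rk_lt hy h1; omega

lemma rk_card {H : Finset (ℝ × ℝ)} {x : ℝ × ℝ} (hx : x ∈ H) : rk H x < H.card := by
  apply Finset.card_lt_card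
  rw [Finset.ssubset_iff_of_subset (Finset.filter_subset _ _)]
  exact ⟨x, hx, by simp⟩

lemma rk_succ {H : Finset (ℝ × ℝ)} (hd : DistinctX ↑H) {x y : ℝ × ℝ} (hx : x ∈ H) (hy : y ∈ H)
    (h : x.1 < y.1) : ∃ c ∈ H, x.1 < c.1 ∧ c.1 ≤ y.1 ∧ rk H c = rk H x + 1 := by
  obtain ⟨c, hc, hmin⟩ := Finset.exists_min_image (H.filter fun q => x.1 < q.1) (fun q => q.1)
    ⟨y, by simp [hy, h]⟩
  simp only [Finset.mem_filter] at hc hmin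
  refine ⟨c, hc.1, hc.2, hmin y ⟨hy, h⟩, ?_⟩
  unfold rk
  rw [← Finset.card_insert_of_notMem (s := H.filter fun q => q.1 < x.1) (a := x) (by simp)]
  congr 1
  ext z
  simp only [Finset.mem_filter, Finset.mem_insert]
  constructor
  · rintro ⟨hz, hzc⟩
    by_cases hzx : z = x
    · exact Or.inl hzx
    · right
      refine ⟨hz, ?_⟩
      rcases lt_or_gt_of_ne (hd z hz x hx hzx) with h1 | h1
      · exact h1
      · have := hmin z ⟨hz, h1⟩; linarith
  · rintro (rfl | ⟨hz, hzx⟩)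
    · exact ⟨hx, hc.2⟩
    · exact ⟨hz, hzx.trans hc.2⟩

lemma mem_even {H : Finset (ℝ × ℝ)} {x : ℝ × ℝ} : x ∈ evenPart H ↔ x ∈ H ∧ Even (rk H x) := by
  simp [evenPart, rk]

lemma mem_odd {H : Finset (ℝ × ℝ)} {x : ℝ × ℝ} : x ∈ oddPart H ↔ x ∈ H ∧ ¬ Even (rk H x) := by
  simp only [oddPart, rk, Finset.mem_filter]

lemma spl_of {H : Finset (ℝ × ℝ)} (hx : DistinctX ↑H)
    (hhigh : HighAbove ↑(oddPart H) ↑(evenPart H))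
    (hdeep : DeepBelow ↑(evenPart H) ↑(oddPart H)) : Spl H (evenPart H) (oddPart H) 1 where
  hs := Or.inl rfl
  hX := Finset.filter_subset _ _
  hY := Finset.filter_subset _ _
  cov := fun x hx => by
    rw [mem_even, mem_odd]; tauto
  dx := hx
  altX := fun x h y h' hxy => by
    rw [mem_even] at h h'
    obtain ⟨c, hc, h1, h2, h3⟩ := rk_succ hx h.1 h'.1 hxy
    have hodd : ¬ Even (rk H c) := by rw [h3, Nat.even_add_one]; simpa using h.2
    refine ⟨c, mem_odd.2 ⟨hc, hodd⟩, h1, lt_of_le_of_ne h2 ?_⟩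
    apply hx c hc y h'.1
    rintro rfl; exact hodd h'.2
  altY := fun x h y h' hxy => by
    rw [mem_odd] at h h'
    obtain ⟨c, hc, h1, h2, h3⟩ := rk_succ hx h.1 h'.1 hxy
    have hev : Even (rk H c) := by rw [h3, Nat.even_add_one]; exact h.2
    refine ⟨c, mem_even.2 ⟨hc, hev⟩, h1, lt_of_le_of_ne h2 ?_⟩
    apply hx c hc y h'.1
    rintro rfl; exact h'.2 hev
  sx := fun a ha b hb hab p hp => by
    have := hdeep a ha b hb hab p hp
    unfold StrictlyAbove at this
    unfold orient; linarith
  sy := fun a ha b hb hab p hp => by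
    have := hhigh a ha b hb hab p hp
    unfold StrictlyBelow at this
    unfold orient; linarith

lemma card_half {H X : Finset (ℝ × ℝ)} (hd : DistinctX ↑H) (hX : X ⊆ H) (r : ℕ)
    (hr : ∀ x ∈ X, rk H x % 2 = r) : X.card ≤ (H.card + 1) / 2 := by
  rw [← Finset.card_range ((H.card + 1) / 2)]
  apply Finset.card_le_card_of_injOn (fun x => rk H x / 2)
  · intro x hx
    have := rk_card (hX hx)
    simp; omega
  · intro x hx y hy hxy
    simp only at hxy
    have h1 := hr x hx
    have h2 := hr y hy
    exact rk_inj hd (hX hx) (hX hy) (by omega)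

lemma card_even {H : Finset (ℝ × ℝ)} (hd : DistinctX ↑H) :
    (evenPart H).card ≤ (H.card + 1) / 2 := by
  apply card_half hd (Finset.filter_subset _ _) 0
  intro x hx
  exact Nat.even_iff.1 (mem_even.1 hx).2

lemma card_odd {H : Finset (ℝ × ℝ)} (hd : DistinctX ↑H) :
    (oddPart H).card ≤ (H.card + 1) / 2 := by
  apply card_half hd (Finset.filter_subset _ _) 1
  intro x hx
  exact Nat.not_even_iff.1 (mem_odd.1 hx).2

lemma Spl.mixed {H X Y : Finset (ℝ × ℝ)} {s : ℝ} (h : Spl H X Y s) {p a : ℝ × ℝ}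
    (hp : p ∈ X) (ha : a ∈ Y) (hv : Vis H p a) : ∀ c ∈ H, ¬ Bt3 p c a := by
  intro c hc hb
  have key : ∃ cx ∈ X, ∃ cy ∈ Y, Bt3 p cx a ∧ Bt3 p cy a := by
    rcases h.cov c hc with h1 | h1
    · rcases hb with hb | hb
      · obtain ⟨d, hd, h2⟩ := h.altX p hp c h1 hb.1
        exact ⟨c, h1, d, hd, Or.inl hb, Or.inl ⟨h2.1, h2.2.trans hb.2⟩⟩
      · obtain ⟨d, hd, h2⟩ := h.altX c h1 p hp hb.2
        exact ⟨c, h1, d, hd, Or.inr hb, Or.inr ⟨hb.1.trans h2.1, h2.2⟩⟩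
    · rcases hb with hb | hb
      · obtain ⟨d, hd, h2⟩ := h.altY c h1 a ha hb.2
        exact ⟨d, hd, c, h1, Or.inl ⟨hb.1.trans h2.1, h2.2⟩, Or.inl hb⟩
      · obtain ⟨d, hd, h2⟩ := h.altY a ha c h1 hb.1
        exact ⟨d, hd, c, h1, Or.inr ⟨h2.1, h2.2.trans hb.2⟩, Or.inr hb⟩
  obtain ⟨cx, hcx, cy, hcy, bx, b_y⟩ := key
  have key2 : (s * orient p a cx < 0 ∧ 0 < s * orient p a cy) ∨
      (0 < s * orient p a cx ∧ s * orient p a cy < 0) := by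
    have hor : p.1 < a.1 ∨ a.1 < p.1 := by
      rcases bx with b | b
      · left; exact b.1.trans b.2
      · right; exact b.1.trans b.2
    rcases hor with hor | hor
    · left
      have bx' : p.1 < cx.1 := by rcases bx with b | b <;> linarith
      have by' : cy.1 < a.1 := by rcases b_y with b | b <;> linarith
      have e1 := h.sx p hp cx hcx bx' a ha
      have e2 := h.sy cy hcy a ha by' p hp
      have f1 : orient p cx a = - orient p a cx := by unfold orient; ring
      have f2 : orient cy a p = - orient p a cy := by unfold orient; ring
      rw [f1] at e1
      rw [f2] at e2
      constructor <;> linarith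
    · right
      have bx' : cx.1 < p.1 := by rcases bx with b | b <;> linarith
      have by' : a.1 < cy.1 := by rcases b_y with b | b <;> linarith
      have e1 := h.sx cx hcx p hp bx' a ha
      have e2 := h.sy a ha cy hcy by' p hp
      have f1 : orient cx p a = orient p a cx := by unfold orient; ring
      have f2 : orient a cy p = orient p a cy := by unfold orient; ring
      rw [f1] at e1
      rw [f2] at e2
      exact ⟨e1, e2⟩
  have a1 := fun hv : (∀ c ∈ H, Bt3 p c a → orient p a c ≤ 0) =>
    And.intro (hv cx (h.hX hcx) bx) (hv cy (h.hY hcy) b_y)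
  have a2 := fun hv : (∀ c ∈ H, Bt3 p c a → 0 ≤ orient p a c) =>
    And.intro (hv cx (h.hX hcx) bx) (hv cy (h.hY hcy) b_y)
  rcases hv with hv | hv
  · have := a1 hv
    rcases h.hs with rfl | rfl <;> rcases key2 with k | k <;> linarith [k.1, k.2, this.1, this.2]
  · have := a2 hv
    rcases h.hs with rfl | rfl <;> rcases key2 with k | k <;> linarith [k.1, k.2, this.1, this.2]

lemma nbr_card {H : Finset (ℝ × ℝ)} (hd : DistinctX ↑H) {p : ℝ × ℝ} (hp : p ∈ H) :
    (H.filter fun a => a ≠ p ∧ ∀ c ∈ H, ¬ Bt3 p c a).card ≤ 2 := by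
  have hsub : (H.filter fun a => a ≠ p ∧ ∀ c ∈ H, ¬ Bt3 p c a) ⊆
      (H.filter fun a => p.1 < a.1 ∧ ∀ c ∈ H, ¬ Bt3 p c a) ∪
      (H.filter fun a => a.1 < p.1 ∧ ∀ c ∈ H, ¬ Bt3 p c a) := by
    intro a ha
    simp only [Finset.mem_union, Finset.mem_filter] at *
    rcases lt_or_gt_of_ne (hd a ha.1 p hp ha.2.1) with h | h
    · right; exact ⟨ha.1, h, ha.2.2⟩
    · left; exact ⟨ha.1, h, ha.2.2⟩
  refine (Finset.card_le_card hsub).trans ((Finset.card_union_le _ _).trans ?_)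
  have h1 : (H.filter fun a => p.1 < a.1 ∧ ∀ c ∈ H, ¬ Bt3 p c a).card ≤ 1 := by
    rw [Finset.card_le_one]
    intro a ha b hb
    simp only [Finset.mem_filter] at ha hb
    by_contra hne
    rcases lt_or_gt_of_ne (hd a ha.1 b hb.1 hne) with h | h
    · exact hb.2.2 a ha.1 (Or.inl ⟨ha.2.1, h⟩)
    · exact ha.2.2 b hb.1 (Or.inl ⟨hb.2.1, h⟩)
  have h2 : (H.filter fun a => a.1 < p.1 ∧ ∀ c ∈ H, ¬ Bt3 p c a).card ≤ 1 := by
    rw [Finset.card_le_one]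
    intro a ha b hb
    simp only [Finset.mem_filter] at ha hb
    by_contra hne
    rcases lt_or_gt_of_ne (hd a ha.1 b hb.1 hne) with h | h
    · exact ha.2.2 b hb.1 (Or.inr ⟨h, hb.2.1⟩)
    · exact hb.2.2 a ha.1 (Or.inr ⟨h, ha.2.1⟩)
  omega

lemma Spl.visStep {H X Y : Finset (ℝ × ℝ)} {s : ℝ} (h : Spl H X Y s) {p : ℝ × ℝ} (hp : p ∈ X) :
    (H.filter fun a => a ≠ p ∧ Vis H p a).card ≤
      (X.filter fun a => a ≠ p ∧ Vis X p a).card + 2 := by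
  have hsub : (H.filter fun a => a ≠ p ∧ Vis H p a) ⊆
      (X.filter fun a => a ≠ p ∧ Vis X p a) ∪
      (H.filter fun a => a ≠ p ∧ ∀ c ∈ H, ¬ Bt3 p c a) := by
    intro a ha
    simp only [Finset.mem_union, Finset.mem_filter] at *
    rcases h.cov a ha.1 with h1 | h1
    · left
      refine ⟨h1, ha.2.1, ?_⟩
      rcases ha.2.2 with hv | hv
      · exact Or.inl fun c hc => hv c (h.hX hc)
      · exact Or.inr fun c hc => hv c (h.hX hc)
    · right
      exact ⟨ha.1, ha.2.1, h.mixed hp h1 ha.2.2⟩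
  refine (Finset.card_le_card hsub).trans ((Finset.card_union_le _ _).trans ?_)
  have := nbr_card h.dx (h.hX hp)
  omega

lemma clog_step {n k : ℕ} (hn : 2 < n) (hk : k ≤ (n + 1) / 2) :
    Nat.clog 2 k + 1 ≤ Nat.clog 2 n := by
  rw [Nat.clog_of_two_le (b := 2) (n := n) (by norm_num) (by omega)]
  have := Nat.clog_mono_right 2 hk
  simpa using this

lemma horton_vis {H : Finset (ℝ × ℝ)} (hH : IsHorton H) : ∀ p ∈ H,
    (H.filter fun a => a ≠ p ∧ Vis H p a).card ≤ 2 * Nat.clog 2 H.card := by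
  induction hH with
  | small H hgp hx hcard =>
    intro p hp
    have h1 : (H.filter fun a => a ≠ p ∧ Vis H p a) ⊆ H.erase p := by
      intro a ha
      simp only [Finset.mem_filter] at ha
      simp [ha.1, ha.2.1]
    have h2 := Finset.card_le_card h1
    rw [Finset.card_erase_of_mem hp] at h2
    have h3 : H.card = 0 ∨ H.card = 1 ∨ H.card = 2 := by omega
    rcases h3 with h3 | h3 | h3
    · omega
    · omega
    · have : Nat.clog 2 2 = 1 := by decide
      rw [h3, this]; omega
  | split H hgp hx hcard h0 h1 hhigh hdeep ih0 ih1 =>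
    intro p hp
    have S := spl_of hx hhigh hdeep
    rcases S.cov p hp with h | h
    · have e1 := S.visStep h
      have e2 := ih0 p h
      have e3 := clog_step hcard (card_even hx)
      omega
    · have e1 := S.symm.visStep h
      have e2 := ih1 p h
      have e3 := clog_step hcard (card_odd hx)
      omega

lemma Spl.visTri {H X Y : Finset (ℝ × ℝ)} {s : ℝ} (h : Spl H X Y s) {x y z : ℝ × ℝ}
    (hx : x ∈ X) (hy : y ∈ X) (hz : z ∈ Y) (hE : ∀ c ∈ H, ¬ RT x y z c) : Vis X x y := by
  have main : ∀ x ∈ X, ∀ y ∈ X, x.1 < y.1 → (∀ c ∈ H, ¬ RT x y z c) → Vis X x y := by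
    intro x hx y hy hxy hE
    have key : ∀ c ∈ X, Bt3 x c y → s * orient x y c ≤ 0 := by
      intro c hc hb
      by_contra hcon
      push Not at hcon
      have hb' : x.1 < c.1 ∧ c.1 < y.1 := by
        rcases hb with b | b
        · exact b
        · exfalso; linarith [b.1, b.2]
      have e1 := h.sx x hx c hc hb'.1 z hz
      have e2 := h.sx c hc y hy hb'.2 z hz
      have f1 : orient x c z = orient z x c := by unfold orient; ring
      have f2 : orient c y z = orient y z c := by unfold orient; ring
      rw [f1] at e1
      rw [f2] at e2
      apply hE c (h.hX hc)
      unfold RT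
      rcases h.hs with rfl | rfl
      · left; exact ⟨by linarith, by linarith, by linarith⟩
      · right; exact ⟨by linarith, by linarith, by linarith⟩
    rcases h.hs with rfl | rfl
    · left; intro c hc hb; have := key c hc hb; linarith
    · right; intro c hc hb; have := key c hc hb; linarith
  by_cases hxy : x = y
  · subst hxy
    left; intro c _ hb
    unfold orient; simp
  rcases lt_or_gt_of_ne (h.dx x (h.hX hx) y (h.hX hy) hxy) with hl | hl
  · exact main x hx y hy hl hE
  · have := main y hy x hx hl (fun c hc hr => hE c hc (RT_swap hr))
    rcases this with hv | hv
    · right; intro c hc hb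
      have := hv c hc hb.symm
      rw [orient_swap] at this; linarith
    · left; intro c hc hb
      have := hv c hc hb.symm
      rw [orient_swap] at this; linarith

def triSet (H : Finset (ℝ × ℝ)) (p : ℝ × ℝ) : Finset ((ℝ × ℝ) × (ℝ × ℝ)) :=
  (H ×ˢ H).filter fun ab => ab.1 ≠ p ∧ ab.2 ≠ p ∧ ab.1 ≠ ab.2 ∧ ∀ c ∈ H, ¬ RT p ab.1 ab.2 c

lemma pairs_card {H : Finset (ℝ × ℝ)} (hH : IsHorton H) :
    ((H ×ˢ H).filter fun ab => ab.2 ≠ ab.1 ∧ Vis H ab.1 ab.2).card ≤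
      H.card * (2 * Nat.clog 2 H.card) := by
  have : ((H ×ˢ H).filter fun ab => ab.2 ≠ ab.1 ∧ Vis H ab.1 ab.2) ⊆
      H.biUnion fun a => (H.filter fun b => b ≠ a ∧ Vis H a b).image fun b => (a, b) := by
    rintro ⟨a, b⟩ h
    simp only [Finset.mem_filter, Finset.mem_product] at h
    simp only [Finset.mem_biUnion, Finset.mem_image, Finset.mem_filter]
    exact ⟨a, h.1.1, b, ⟨h.1.2, h.2⟩, rfl⟩
  refine (Finset.card_le_card this).trans ?_
  apply Finset.card_biUnion_le_card_mul
  intro a ha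
  exact Finset.card_image_le.trans (horton_vis hH a ha)

lemma Spl.triStep {H X Y : Finset (ℝ × ℝ)} {s : ℝ} (h : Spl H X Y s) (hX : IsHorton X)
    (hY : IsHorton Y) {p : ℝ × ℝ} (hp : p ∈ X) :
    (triSet H p).card ≤ (triSet X p).card + 6 * (H.card * Nat.clog 2 H.card) := by
  set V := X.filter fun a => a ≠ p ∧ Vis X p a with hV
  set P := (Y ×ˢ Y).filter fun ab => ab.2 ≠ ab.1 ∧ Vis Y ab.1 ab.2 with hP
  have hsub : triSet H p ⊆ (triSet X p ∪ V ×ˢ Y) ∪ (Y ×ˢ V ∪ P) := by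
    rintro ⟨a, b⟩ hab
    simp only [triSet, Finset.mem_filter, Finset.mem_product, Finset.mem_union, hV, hP] at *
    obtain ⟨⟨ha, hb⟩, hap, hbp, hne, hE⟩ := hab
    rcases h.cov a ha with h1 | h1 <;> rcases h.cov b hb with h2 | h2
    · left; left
      exact ⟨⟨h1, h2⟩, hap, hbp, hne, fun c hc => hE c (h.hX hc)⟩
    · left; right
      exact ⟨⟨h1, hap, h.visTri hp h1 h2 hE⟩, h2⟩
    · right; left
      refine ⟨h1, h2, hbp, h.visTri hp h2 h1 ?_⟩
      intro c hc hr
      exact hE c hc (RT_rot (RT_swap hr))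
    · right; right
      refine ⟨⟨h1, h2⟩, hne.symm, h.symm.visTri h1 h2 hp ?_⟩
      intro c hc hr
      exact hE c hc (RT_rot (RT_rot hr))
  have c1 : V.card ≤ 2 * Nat.clog 2 H.card :=
    (horton_vis hX p hp).trans (by have := Nat.clog_mono_right 2 (Finset.card_le_card h.hX); omega)
  have cY := Finset.card_le_card h.hY
  have c2 : P.card ≤ H.card * (2 * Nat.clog 2 H.card) :=
    (pairs_card hY).trans (Nat.mul_le_mul cY (by have := Nat.clog_mono_right 2 cY; omega))
  have c3 : (V ×ˢ Y).card ≤ H.card * (2 * Nat.clog 2 H.card) := by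
    rw [Finset.card_product, mul_comm]; exact Nat.mul_le_mul cY c1
  have c4 : (Y ×ˢ V).card ≤ H.card * (2 * Nat.clog 2 H.card) := by
    rw [Finset.card_product]; exact Nat.mul_le_mul cY c1
  have t0 := Finset.card_le_card hsub
  have t1 := Finset.card_union_le (triSet X p ∪ V ×ˢ Y) (Y ×ˢ V ∪ P)
  have t2 := Finset.card_union_le (triSet X p) (V ×ˢ Y)
  have t3 := Finset.card_union_le (Y ×ˢ V) P
  have e : H.card * (2 * Nat.clog 2 H.card) = 2 * (H.card * Nat.clog 2 H.card) := by ring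
  omega

lemma tri_arith {n k T0 T : ℕ} (hn : 2 < n) (hk : k ≤ (n + 1) / 2)
    (h0 : T0 ≤ 12 * (k * Nat.clog 2 k)) (h : T ≤ T0 + 6 * (n * Nat.clog 2 n)) :
    T ≤ 12 * (n * Nat.clog 2 n) := by
  have e := clog_step hn hk
  have e2 : Nat.clog 2 n ≤ n := Nat.clog_le_of_le_pow (Nat.lt_two_pow_self).le
  have hk' : 2 * k ≤ n + 1 := by omega
  generalize Nat.clog 2 n = L at *
  generalize Nat.clog 2 k = l at *
  have : 2 * (k * l) ≤ n * L := by
    have h3 : 2 * k * l ≤ (n + 1) * l := Nat.mul_le_mul_right l hk'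
    have h4 : n * (l + 1) ≤ n * L := Nat.mul_le_mul_left n e
    nlinarith
  omega

lemma horton_tri {H : Finset (ℝ × ℝ)} (hH : IsHorton H) : ∀ p ∈ H,
    (triSet H p).card ≤ 12 * (H.card * Nat.clog 2 H.card) := by
  induction hH with
  | small H hgp hx hcard =>
    intro p hp
    have : triSet H p = ∅ := by
      rw [Finset.eq_empty_iff_forall_notMem]
      rintro ⟨a, b⟩ hab
      simp only [triSet, Finset.mem_filter, Finset.mem_product] at hab
      obtain ⟨⟨ha, hb⟩, hap, hbp, hne, -⟩ := hab
      have : ({p, a, b} : Finset (ℝ × ℝ)) ⊆ H := by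
        intro z hz; simp at hz; rcases hz with rfl | rfl | rfl <;> assumption
      have h3 := Finset.card_le_card this
      rw [Finset.card_eq_three.2 ⟨p, a, b, hap.symm, hbp.symm, hne, rfl⟩] at h3
      omega
    simp [this]
  | split H hgp hx hcard h0 h1 hhigh hdeep ih0 ih1 =>
    intro p hp
    have S := spl_of hx hhigh hdeep
    rcases S.cov p hp with h | h
    · exact tri_arith hcard (card_even hx) (ih0 p h) (S.triStep h0 h1 h)
    · exact tri_arith hcard (card_odd hx) (ih1 p h) (S.symm.triStep h1 h0 h)

def cr (u v : ℤ × ℤ) : ℤ := u.1 * v.2 - u.2 * v.1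

def idet (a b c : ℤ × ℤ) : ℤ := (b.1 - a.1) * (c.2 - a.2) - (b.2 - a.2) * (c.1 - a.1)

def IT (a b c x : ℤ × ℤ) : Prop :=
  (0 < idet a b x ∧ 0 < idet b c x ∧ 0 < idet c a x) ∨
  (idet a b x < 0 ∧ idet b c x < 0 ∧ idet c a x < 0)

lemma idet_swap (a b c : ℤ × ℤ) : idet b a c = - idet a b c := by
  unfold idet; ring

lemma IT_rot {a b c x : ℤ × ℤ} (h : IT a b c x) : IT b c a x := by
  unfold IT at *; tauto

lemma IT_swap {a b c x : ℤ × ℤ} (h : IT a b c x) : IT b a c x := by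
  unfold IT at *
  rw [idet_swap a b x, idet_swap c a x, idet_swap b c x]
  rcases h with ⟨h1, h2, h3⟩ | ⟨h1, h2, h3⟩
  · right; refine ⟨?_, ?_, ?_⟩ <;> linarith
  · left; refine ⟨?_, ?_, ?_⟩ <;> linarith

def box (m : ℕ) : Finset (ℤ × ℤ) := Finset.Icc 1 (m : ℤ) ×ˢ Finset.Icc 1 (m : ℤ)

lemma mem_box {m : ℕ} {x : ℤ × ℤ} :
    x ∈ box m ↔ (1 ≤ x.1 ∧ x.1 ≤ m) ∧ (1 ≤ x.2 ∧ x.2 ≤ m) := by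
  simp [box]

lemma conv_aux {d1 d2 d3 p a b x m : ℤ} (h1 : 0 < d1) (h2 : 0 < d2) (h3 : 0 < d3)
    (h : (d1 + d2 + d3) * x = d1 * p + d2 * a + d3 * b)
    (hp : 1 ≤ p ∧ p ≤ m) (ha : 1 ≤ a ∧ a ≤ m) (hb : 1 ≤ b ∧ b ≤ m) : 1 ≤ x ∧ x ≤ m := by
  constructor
  · by_contra hc
    push Not at hc
    nlinarith [mul_nonneg h1.le (sub_nonneg.2 hp.1), mul_nonneg h2.le (sub_nonneg.2 ha.1),
      mul_nonneg h3.le (sub_nonneg.2 hb.1), mul_pos (add_pos (add_pos h1 h2) h3) (sub_pos.2 hc)]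
  · by_contra hc
    push Not at hc
    nlinarith [mul_nonneg h1.le (sub_nonneg.2 hp.2), mul_nonneg h2.le (sub_nonneg.2 ha.2),
      mul_nonneg h3.le (sub_nonneg.2 hb.2), mul_pos (add_pos (add_pos h1 h2) h3) (sub_pos.2 hc)]

lemma box_of_pos {m : ℕ} {p a b x : ℤ × ℤ} (hp : p ∈ box m) (ha : a ∈ box m) (hb : b ∈ box m)
    (h1 : 0 < idet p a x) (h2 : 0 < idet a b x) (h3 : 0 < idet b p x) : x ∈ box m := by
  rw [mem_box] at *
  constructor
  · apply conv_aux h2 h3 h1 _ hp.1 ha.1 hb.1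
    unfold idet; ring
  · apply conv_aux h2 h3 h1 _ hp.2 ha.2 hb.2
    unfold idet; ring

lemma prim_dec {d : ℤ × ℤ} (h : d ≠ 0) :
    ∃ (s : ℤ) (u : ℤ × ℤ), 1 ≤ s ∧ IsCoprime u.1 u.2 ∧ d.1 = s * u.1 ∧ d.2 = s * u.2 := by
  have hg : 0 < Int.gcd d.1 d.2 := by
    rw [Nat.pos_iff_ne_zero]
    intro h0
    rw [Int.gcd_eq_zero_iff] at h0
    exact h (Prod.ext h0.1 h0.2)
  obtain ⟨x, y, h1, h2, h3⟩ := Int.exists_gcd_one hg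
  refine ⟨Int.gcd d.1 d.2, (x, y), by exact_mod_cast hg, Int.isCoprime_iff_gcd_eq_one.2 h1, ?_, ?_⟩
  · rw [mul_comm]; exact h2
  · rw [mul_comm]; exact h3

lemma prim_line {w d : ℤ × ℤ} (hw : IsCoprime w.1 w.2) (h : cr w d = 0) :
    ∃ j : ℤ, d.1 = j * w.1 ∧ d.2 = j * w.2 := by
  obtain ⟨s, t, hst⟩ := hw
  unfold cr at h
  refine ⟨s * d.1 + t * d.2, ?_, ?_⟩
  · linear_combination (-d.1) * hst + (-t) * h
  · linear_combination (-d.2) * hst + s * h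

lemma lemK {u v : ℤ × ℤ} (hu : IsCoprime u.1 u.2) (hv : IsCoprime v.1 v.2) (hD : 2 ≤ cr u v) :
    ∃ (A : ℤ) (w : ℤ × ℤ), 1 ≤ A ∧ A ≤ cr u v - 1 ∧ cr u v * w.1 = A * u.1 + v.1 ∧
      cr u v * w.2 = A * u.2 + v.2 := by
  obtain ⟨α, β, hab⟩ := hu
  set D := cr u v with hDd
  have hDe : D = u.1 * v.2 - u.2 * v.1 := rfl
  set A0 := -(α * v.1 + β * v.2) with hA0
  have e1 : A0 * u.1 + v.1 = -β * D := by
    rw [hA0, hDe]; linear_combination (-v.1) * hab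
  have e2 : A0 * u.2 + v.2 = α * D := by
    rw [hA0, hDe]; linear_combination (-v.2) * hab
  have hm := Int.emod_add_mul_ediv A0 D
  have hn := Int.emod_nonneg A0 (by omega : D ≠ 0)
  have hl := Int.emod_lt_of_pos A0 (by omega : 0 < D)
  have hA : A0 % D ≠ 0 := by
    intro h0
    have hd : D ∣ A0 := Int.dvd_of_emod_eq_zero h0
    have d1 : D ∣ v.1 := by
      have : v.1 = -β * D - A0 * u.1 := by linarith
      rw [this]
      exact dvd_sub (dvd_mul_left _ _) (hd.mul_right _)
    have d2 : D ∣ v.2 := by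
      have : v.2 = α * D - A0 * u.2 := by linarith
      rw [this]
      exact dvd_sub (dvd_mul_left _ _) (hd.mul_right _)
    have := hv.isUnit_of_dvd' d1 d2
    rcases Int.isUnit_iff.1 this with h | h <;> omega
  refine ⟨A0 % D, (-β - (A0 / D) * u.1, α - (A0 / D) * u.2), by omega, by omega, ?_, ?_⟩
  · simp only; linear_combination (-1) * e1 - u.1 * hm
  · simp only; linear_combination (-1) * e2 - u.2 * hm

def ClsA (p a b : ℤ × ℤ) : Prop :=
  ∃ w : ℤ × ℤ, IsCoprime w.1 w.2 ∧ (∃ t : ℤ, 1 ≤ t ∧ a.1 = p.1 + t * w.1 ∧ a.2 = p.2 + t * w.2) ∧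
    (cr w (b - p) = 1 ∨ cr w (b - p) = -1)

def ClsB (p a b : ℤ × ℤ) : Prop :=
  ∃ w : ℤ × ℤ, IsCoprime w.1 w.2 ∧ (a.1 = p.1 + 2 * w.1 ∧ a.2 = p.2 + 2 * w.2) ∧
    (cr w (b - p) = 2 ∨ cr w (b - p) = -2)

def ClsC (p a b : ℤ × ℤ) : Prop :=
  ∃ w : ℤ × ℤ, IsCoprime w.1 w.2 ∧ (∃ t : ℤ, t ≠ 0 ∧ b.1 = a.1 + t * w.1 ∧ b.2 = a.2 + t * w.2) ∧
    (cr w (a - p) = 1 ∨ cr w (a - p) = -1)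

lemma classify_pos {m : ℕ} {p a b : ℤ × ℤ} (hp : p ∈ box m) (ha : a ∈ box m) (hb : b ∈ box m)
    (h : 0 < idet p a b) (hE : ∀ x ∈ box m, ¬ IT p a b x) :
    ClsA p a b ∨ ClsA p b a ∨ ClsB p a b ∨ ClsC p a b := by
  have hE' : ∀ x, ¬ (0 < idet p a x ∧ 0 < idet a b x ∧ 0 < idet b p x) := by
    rintro x ⟨h1, h2, h3⟩
    exact hE x (box_of_pos hp ha hb h1 h2 h3) (Or.inl ⟨h1, h2, h3⟩)
  obtain ⟨s, u, hs, hu, hu1, hu2⟩ := prim_dec (d := a - p) (by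
    intro h0
    have e1 : a.1 - p.1 = 0 := congrArg Prod.fst h0
    have e2 : a.2 - p.2 = 0 := congrArg Prod.snd h0
    unfold idet at h; rw [e1, e2] at h; simp at h)
  obtain ⟨t, v, ht, hv, hv1, hv2⟩ := prim_dec (d := b - p) (by
    intro h0
    have e1 : b.1 - p.1 = 0 := congrArg Prod.fst h0
    have e2 : b.2 - p.2 = 0 := congrArg Prod.snd h0
    unfold idet at h; rw [e1, e2] at h; simp at h)
  simp only [Prod.fst_sub, Prod.snd_sub] at hu1 hu2 hv1 hv2
  have hD : idet p a b = s * t * cr u v := by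
    unfold idet cr; rw [hu1, hu2, hv1, hv2]; ring
  have hst : 0 < s * t := by positivity
  have hDpos : 0 < cr u v := by
    rw [hD] at h
    exact (mul_pos_iff_of_pos_left hst).1 h
  have a1 : a.1 = p.1 + s * u.1 := by linarith
  have a2 : a.2 = p.2 + s * u.2 := by linarith
  have b1 : b.1 = p.1 + t * v.1 := by linarith
  have b2 : b.2 = p.2 + t * v.2 := by linarith
  -- interior test for `p + w`
  have int : ∀ w : ℤ × ℤ, 0 < cr u w → 0 < cr w v →
      0 < s * t * cr u v - t * cr w v - s * cr u w → False := by
    intro w h1 h2 h3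
    apply hE' (p.1 + w.1, p.2 + w.2)
    refine ⟨?_, ?_, ?_⟩
    · have : idet p a (p.1 + w.1, p.2 + w.2) = s * cr u w := by
        unfold idet cr; simp only [a1, a2]; ring
      rw [this]; exact mul_pos (by omega) h1
    · have : idet a b (p.1 + w.1, p.2 + w.2) = s * t * cr u v - t * cr w v - s * cr u w := by
        unfold idet cr; simp only [a1, a2, b1, b2]; ring
      rw [this]; exact h3
    · have : idet b p (p.1 + w.1, p.2 + w.2) = t * cr w v := by
        unfold idet cr; simp only [b1, b2]; ring
      rw [this]; exact mul_pos (by omega) h2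
  by_cases hD2 : 2 ≤ cr u v
  · obtain ⟨A, w, hA1, hA2, hw1, hw2⟩ := lemK hu hv hD2
    have c1 : cr u w = 1 := by
      have : cr u v * cr u w = cr u v * 1 := by
        have : cr u v * cr u w = u.1 * (cr u v * w.2) - u.2 * (cr u v * w.1) := by
          unfold cr; ring
        rw [this, hw1, hw2]; unfold cr; ring
      exact mul_left_cancel₀ (by omega) this
    have c2 : cr w v = A := by
      have : cr u v * cr w v = cr u v * A := by
        have : cr u v * cr w v = (cr u v * w.1) * v.2 - (cr u v * w.2) * v.1 := by
          conv_lhs => rw [show cr w v = w.1 * v.2 - w.2 * v.1 from rfl]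
          ring
        rw [this, hw1, hw2]; unfold cr; ring
      exact mul_left_cancel₀ (by omega) this
    by_cases h11 : s = 1 ∧ t = 1
    · obtain ⟨rfl, rfl⟩ := h11
      by_cases hA3 : A = cr u v - 1
      · right; right; right
        have g1 : v.1 - u.1 = cr u v * (w.1 - u.1) := by rw [hA3] at hw1; linarith
        have g2 : v.2 - u.2 = cr u v * (w.2 - u.2) := by rw [hA3] at hw2; linarith
        refine ⟨(w.1 - u.1, w.2 - u.2), ?_, ⟨cr u v, by omega, ?_, ?_⟩, ?_⟩
        · refine ⟨-u.2, u.1, ?_⟩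
          simp only
          unfold cr at c1; linarith
        · simp only; linarith
        · simp only; linarith
        · right
          simp only [cr, Prod.fst_sub, Prod.snd_sub, hu1, hu2] at *
          linarith
      · exfalso
        apply int w (by omega) (by omega)
        rw [c1, c2]; omega
    · exfalso
      apply int w (by omega) (by omega)
      rw [c1, c2]
      generalize cr u v = D at *
      have k1 : t * A ≤ t * (D - 1) := mul_le_mul_of_nonneg_left hA2 (by omega)
      have k2 : (s - 1) * t * 2 ≤ (s - 1) * t * D :=
        mul_le_mul_of_nonneg_left hD2 (mul_nonneg (by omega) (by omega))
      have k3 : 0 < (s - 1) * t + (t - 1) * s := by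
        rcases (by omega : 1 < s ∨ 1 < t) with h | h
        · have := mul_pos (sub_pos.2 h) (by omega : 0 < t)
          have := mul_nonneg (sub_nonneg.2 ht) (by omega : 0 ≤ s)
          omega
        · have := mul_pos (sub_pos.2 h) (by omega : 0 < s)
          have := mul_nonneg (sub_nonneg.2 hs) (by omega : 0 ≤ t)
          omega
      nlinarith
  · have hD1 : cr u v = 1 := by omega
    by_cases s1 : s = 1
    · right; left
      refine ⟨v, hv, ⟨t, ht, b1, b2⟩, Or.inr ?_⟩
      subst s1
      simp only [cr, Prod.fst_sub, Prod.snd_sub, hu1, hu2] at *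
      linarith
    by_cases t1 : t = 1
    · left
      refine ⟨u, hu, ⟨s, hs, a1, a2⟩, Or.inl ?_⟩
      subst t1
      simp only [cr, Prod.fst_sub, Prod.snd_sub, hv1, hv2] at *
      linarith
    by_cases h22 : s = 2 ∧ t = 2
    · obtain ⟨rfl, rfl⟩ := h22
      right; right; left
      refine ⟨u, hu, ⟨a1, a2⟩, Or.inl ?_⟩
      simp only [cr, Prod.fst_sub, Prod.snd_sub, hv1, hv2] at *
      linarith
    · exfalso
      have e1 : cr u (u + v) = 1 := by
        rw [← hD1]; simp [cr]; ring
      have e2 : cr (u + v) v = 1 := by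
        rw [← hD1]; simp [cr]; ring
      apply int (u + v) (by omega) (by omega)
      rw [e1, e2, hD1]
      have k1 : 0 ≤ (s - 2) * (t - 2) := mul_nonneg (by omega) (by omega)
      have : 4 < s + t := by omega
      nlinarith

lemma classify {m : ℕ} {p a b : ℤ × ℤ} (hp : p ∈ box m) (ha : a ∈ box m) (hb : b ∈ box m)
    (h : idet p a b ≠ 0) (hE : ∀ x ∈ box m, ¬ IT p a b x) :
    (ClsA p a b ∨ ClsB p a b ∨ ClsC p a b) ∨ (ClsA p b a ∨ ClsB p b a ∨ ClsC p b a) := by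
  rcases lt_or_gt_of_ne h with h | h
  · have h' : 0 < idet p b a := by
      have : idet p b a = - idet p a b := by unfold idet; ring
      omega
    have := classify_pos hp hb ha h' (fun x hx hi => hE x hx (IT_rot (IT_swap hi)))
    tauto
  · have := classify_pos hp ha hb h hE
    tauto

def io (z : ℤ × ℤ) : ℝ × ℝ := ((z.1 : ℝ), (z.2 : ℝ))

lemma io_inj : Function.Injective io := by
  intro a b h
  unfold io at h
  have h1 := congrArg Prod.fst h
  have h2 := congrArg Prod.snd h
  simp only [Int.cast_inj] at h1 h2
  exact Prod.ext h1 h2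

lemma grid_eq (m : ℕ) : grid m = (box m).image io := by
  ext x
  simp only [grid, Finset.mem_image, Finset.mem_product, Finset.mem_Icc, mem_box]
  constructor
  · rintro ⟨z, hz, rfl⟩
    refine ⟨((z.1 : ℤ), (z.2 : ℤ)), ?_, ?_⟩
    · simp only; omega
    · simp [io]
  · rintro ⟨z, hz, rfl⟩
    refine ⟨(z.1.toNat, z.2.toNat), ?_, ?_⟩
    · simp only; omega
    · have h1 : ((z.1.toNat : ℤ)) = z.1 := Int.toNat_of_nonneg (by omega)
      have h2 : ((z.2.toNat : ℤ)) = z.2 := Int.toNat_of_nonneg (by omega)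
      unfold io
      ext
      · simp only; exact_mod_cast congrArg (Int.cast : ℤ → ℝ) h1
      · simp only; exact_mod_cast congrArg (Int.cast : ℤ → ℝ) h2

lemma io_mem {m : ℕ} {z : ℤ × ℤ} (hz : z ∈ box m) : io z ∈ grid m := by
  rw [grid_eq]; exact Finset.mem_image_of_mem _ hz

lemma orient_io (a b c : ℤ × ℤ) : orient (io a) (io b) (io c) = (idet a b c : ℝ) := by
  unfold orient io idet; push_cast; ring

lemma g_inj {m : ℕ} {ε : ℝ} {f : ℝ × ℝ → ℝ × ℝ} (h : IsSquaredHorton m ε f) :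
    Set.InjOn (fun z => f (io z)) (box m : Set (ℤ × ℤ)) := by
  intro a ha b hb hab
  exact io_inj (h.inj (io_mem ha) (io_mem hb) hab)

lemma g_pos {m : ℕ} {ε : ℝ} {f : ℝ × ℝ → ℝ × ℝ} (h : IsSquaredHorton m ε f) {a b c : ℤ × ℤ}
    (ha : a ∈ box m) (hb : b ∈ box m) (hc : c ∈ box m) (hd : 0 < idet a b c) :
    0 < orient (f (io a)) (f (io b)) (f (io c)) := by
  have e : 0 < orient (io a) (io b) (io c) := by rw [orient_io]; exact_mod_cast hd
  exact (h.orient_iff _ (io_mem ha) _ (io_mem hb) _ (io_mem hc) e.ne').1 e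

lemma g_neg {m : ℕ} {ε : ℝ} {f : ℝ × ℝ → ℝ × ℝ} (h : IsSquaredHorton m ε f) {a b c : ℤ × ℤ}
    (ha : a ∈ box m) (hb : b ∈ box m) (hc : c ∈ box m) (hd : idet a b c < 0) :
    orient (f (io a)) (f (io b)) (f (io c)) < 0 := by
  have := g_pos h hb ha hc (by rw [idet_swap]; omega)
  rw [orient_swap] at this; linarith

lemma elen_coord {p q : ℝ × ℝ} {ε : ℝ} (h : elen p q ≤ ε) :
    |p.1 - q.1| ≤ ε ∧ |p.2 - q.2| ≤ ε := by
  unfold elen at h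
  constructor
  · refine le_trans ?_ h
    apply Real.le_sqrt_of_sq_le
    rw [sq_abs]; nlinarith [sq_nonneg (p.2 - q.2)]
  · refine le_trans ?_ h
    apply Real.le_sqrt_of_sq_le
    rw [sq_abs]; nlinarith [sq_nonneg (p.1 - q.1)]

lemma lt1 {m : ℕ} {ε : ℝ} {f : ℝ × ℝ → ℝ × ℝ} (h : IsSquaredHorton m ε f) {a b : ℤ × ℤ}
    (ha : a ∈ box m) (hb : b ∈ box m) (hl : (f (io a)).1 < (f (io b)).1) : a.1 ≤ b.1 := by
  by_contra hc
  push Not at hc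
  have e1 := abs_le.1 (elen_coord (h.close _ (io_mem ha))).1
  have e2 := abs_le.1 (elen_coord (h.close _ (io_mem hb))).1
  have h3 := h.eps_lt
  have h4 : (b.1 : ℝ) + 1 ≤ a.1 := by exact_mod_cast hc
  simp only [io] at *
  linarith [e1.1, e2.2]

lemma lt2 {m : ℕ} {ε : ℝ} {f : ℝ × ℝ → ℝ × ℝ} (h : IsSquaredHorton m ε f) {a b : ℤ × ℤ}
    (ha : a ∈ box m) (hb : b ∈ box m) (hl : (f (io a)).2 < (f (io b)).2) : a.2 ≤ b.2 := by
  by_contra hc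
  push Not at hc
  have e1 := abs_le.1 (elen_coord (h.close _ (io_mem ha))).2
  have e2 := abs_le.1 (elen_coord (h.close _ (io_mem hb))).2
  have h3 := h.eps_lt
  have h4 : (b.2 : ℝ) + 1 ≤ a.2 := by exact_mod_cast hc
  simp only [io] at *
  linarith [e1.1, e2.2]

def Ln (m : ℕ) (p w : ℤ × ℤ) (σ : ℤ) : Finset (ℤ × ℤ) :=
  (box m).filter fun x => cr w (x - p) = σ

lemma mem_Ln {m : ℕ} {p w x : ℤ × ℤ} {σ : ℤ} :
    x ∈ Ln m p w σ ↔ x ∈ box m ∧ cr w (x - p) = σ := by simp [Ln]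

lemma Ln_diff {m : ℕ} {p w x y : ℤ × ℤ} {σ : ℤ} (hw : IsCoprime w.1 w.2)
    (hx : x ∈ Ln m p w σ) (hy : y ∈ Ln m p w σ) :
    ∃ j : ℤ, y.1 = x.1 + j * w.1 ∧ y.2 = x.2 + j * w.2 := by
  rw [mem_Ln] at hx hy
  obtain ⟨j, h1, h2⟩ := prim_line (d := y - x) hw (by
    have : cr w (y - x) = cr w (y - p) - cr w (x - p) := by simp [cr]; ring
    omega)
  simp only [Prod.fst_sub, Prod.snd_sub] at h1 h2
  exact ⟨j, by linarith, by linarith⟩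

lemma collinear_iff_orient {a b x : ℝ × ℝ} (hab : a ≠ b) :
    Collinear ℝ ({a, b, x} : Set (ℝ × ℝ)) ↔ orient a b x = 0 := by
  rw [collinear_iff_of_mem (p₀ := a) (by simp)]
  constructor
  · rintro ⟨v, hv⟩
    obtain ⟨r, hr⟩ := hv b (by simp)
    obtain ⟨s, hs⟩ := hv x (by simp)
    unfold orient
    rw [hr, hs]; simp; ring
  · intro h
    refine ⟨b - a, ?_⟩
    intro z hz
    simp only [Set.mem_insert_iff, Set.mem_singleton_iff] at hz
    rcases hz with rfl | rfl | rfl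
    · exact ⟨0, by simp⟩
    · exact ⟨1, by simp⟩
    · unfold orient at h
      by_cases h1 : b.1 - a.1 = 0
      · have h2 : b.2 - a.2 ≠ 0 := by
          intro h2; apply hab; ext <;> linarith
        have h3 : z.1 - a.1 = 0 := by
          rw [h1] at h
          have : (b.2 - a.2) * (z.1 - a.1) = 0 := by linarith
          exact (mul_eq_zero.1 this).resolve_left h2
        refine ⟨(z.2 - a.2) / (b.2 - a.2), ?_⟩
        ext
        · simp [h1]; linarith
        · simp; field_simp; ring
      · refine ⟨(z.1 - a.1) / (b.1 - a.1), ?_⟩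
        ext
        · simp; field_simp; ring
        · simp; field_simp; linarith

lemma gridLine_eq {m : ℕ} {p w a b : ℤ × ℤ} {σ : ℤ} (hw : IsCoprime w.1 w.2)
    (ha : a ∈ Ln m p w σ) (hb : b ∈ Ln m p w σ) (hab : a ≠ b) :
    gridLine m (io a) (io b) = (Ln m p w σ).image io := by
  obtain ⟨j, hj1, hj2⟩ := Ln_diff hw ha hb
  have hj : j ≠ 0 := by
    rintro rfl
    apply hab; ext <;> simp_all
  have key : ∀ x, idet a b x = j * (cr w (x - p) - cr w (a - p)) := by
    intro x
    unfold idet; rw [hj1, hj2]; simp [cr]; ring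
  have ha2 := (mem_Ln.1 ha).2
  ext y
  simp only [gridLine, Finset.mem_filter, grid_eq, Finset.mem_image]
  constructor
  · rintro ⟨⟨x, hx, rfl⟩, hc⟩
    refine ⟨x, mem_Ln.2 ⟨hx, ?_⟩, rfl⟩
    rw [collinear_iff_orient (io_inj.ne hab), orient_io] at hc
    have hc' : idet a b x = 0 := by exact_mod_cast hc
    rw [key] at hc'
    have := (mul_eq_zero.1 hc').resolve_left hj
    omega
  · rintro ⟨x, hx, rfl⟩
    refine ⟨⟨x, (mem_Ln.1 hx).1, rfl⟩, ?_⟩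
    rw [collinear_iff_orient (io_inj.ne hab), orient_io, key, ha2, (mem_Ln.1 hx).2]
    simp

lemma horton_small {H : Finset (ℝ × ℝ)} (h : H.card ≤ 1) : IsHorton H := by
  rw [Finset.card_le_one] at h
  refine IsHorton.small H ?_ ?_ (by rw [← Finset.card_le_one] at h; omega)
  · intro a ha b hb c hc hab
    exact absurd (h a ha b hb) hab
  · intro a ha b hb hab
    exact absurd (h a ha b hb) hab

structure LineMap (m : ℕ) (f : ℝ × ℝ → ℝ × ℝ) (p w : ℤ × ℤ) (σ : ℤ) (k : ℤ × ℤ → ℝ × ℝ) :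
    Prop where
  inj : Set.InjOn k (box m : Set (ℤ × ℤ))
  ori : ∀ a b c, orient (k a) (k b) (k c) = orient (f (io a)) (f (io b)) (f (io c))
  horton : IsHorton ((Ln m p w σ).image k)
  ord : ∀ a ∈ Ln m p w σ, ∀ c ∈ Ln m p w σ, ∀ b ∈ Ln m p w σ, Bt3 (k a) (k c) (k b) →
    ∀ i j : ℤ, c.1 = a.1 + i * w.1 → c.2 = a.2 + i * w.2 → b.1 = a.1 + j * w.1 →
      b.2 = a.2 + j * w.2 → (0 < i ∧ i < j) ∨ (j < i ∧ i < 0)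

lemma ord_aux {w i j a b c : ℤ} (hw : w ≠ 0) (hc : c = a + i * w) (hb : b = a + j * w)
    (hi : i ≠ 0) (hij : i ≠ j)
    (h : (a ≤ c ∧ c ≤ b) ∨ (b ≤ c ∧ c ≤ a)) : (0 < i ∧ i < j) ∨ (j < i ∧ i < 0) := by
  subst hc hb
  rcases h with ⟨h1, h2⟩ | ⟨h1, h2⟩
  · have g1 : 0 ≤ i * w := by linarith
    have g2 : 0 ≤ (j - i) * w := by linarith
    rcases lt_or_gt_of_ne hw with hw | hw
    · right
      have := nonpos_of_mul_nonneg_left g1 hw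
      have := nonpos_of_mul_nonneg_left g2 hw
      omega
    · left
      have := nonneg_of_mul_nonneg_left g1 hw
      have := nonneg_of_mul_nonneg_left g2 hw
      omega
  · have g1 : 0 ≤ (-i) * w := by linarith
    have g2 : 0 ≤ (i - j) * w := by linarith
    rcases lt_or_gt_of_ne hw with hw | hw
    · left
      have := nonpos_of_mul_nonneg_left g1 hw
      have := nonpos_of_mul_nonneg_left g2 hw
      omega
    · right
      have := nonneg_of_mul_nonneg_left g1 hw
      have := nonneg_of_mul_nonneg_left g2 hw
      omega

lemma bt_ne {k : ℤ × ℤ → ℝ × ℝ} {w a b c : ℤ × ℤ} {i j : ℤ} (hb : Bt3 (k a) (k c) (k b))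
    (h1 : c.1 = a.1 + i * w.1) (h2 : c.2 = a.2 + i * w.2) (h3 : b.1 = a.1 + j * w.1)
    (h4 : b.2 = a.2 + j * w.2) : i ≠ 0 ∧ i ≠ j := by
  constructor
  · rintro rfl
    have : c = a := by ext <;> simp [h1, h2]
    subst this
    rcases hb with hb | hb <;> linarith [hb.1, hb.2]
  · rintro rfl
    have : c = b := by ext <;> simp [h1, h2, h3, h4]
    subst this
    rcases hb with hb | hb <;> linarith [hb.1, hb.2]

lemma exists_lineMap {m : ℕ} {ε : ℝ} {f : ℝ × ℝ → ℝ × ℝ} (h : IsSquaredHorton m ε f)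
    (p w : ℤ × ℤ) (σ : ℤ) (hw : IsCoprime w.1 w.2) : ∃ k, LineMap m f p w σ k := by
  by_cases hw1 : w.1 = 0
  · have hw2 : w.2 ≠ 0 := by
      intro h2; rw [hw1, h2] at hw; exact not_isCoprime_zero_zero hw
    refine ⟨fun z => rotCW (f (io z)), ?_, ?_, ?_, ?_⟩
    · intro a ha b hb hab
      apply g_inj h ha hb
      simp only [rotCW, Prod.mk.injEq, neg_inj] at hab
      exact Prod.ext hab.2 hab.1
    · intro a b c
      unfold orient rotCW; simp only; ring
    · by_cases hex : ∃ a ∈ Ln m p w σ, ∃ b ∈ Ln m p w σ, a ≠ b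
      · obtain ⟨a, ha, b, hb, hab⟩ := hex
        have := h.vertical _ (io_mem (mem_Ln.1 ha).1) _ (io_mem (mem_Ln.1 hb).1) (io_inj.ne hab)
          (by
            obtain ⟨j, hj, -⟩ := Ln_diff hw ha hb
            simp [io, hj, hw1])
        rw [gridLine_eq hw ha hb hab, Finset.image_image, Finset.image_image] at this
        exact this
      · apply horton_small
        refine Finset.card_image_le.trans (Finset.card_le_one.2 ?_)
        intro a ha b hb
        by_contra hab
        exact hex ⟨a, ha, b, hb, hab⟩
    · intro a ha c hc b hb hbt i j h1 h2 h3 h4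
      have hne := bt_ne (k := fun z => rotCW (f (io z))) hbt h1 h2 h3 h4
      apply ord_aux hw2 h2 h4 hne.1 hne.2
      rcases hbt with hbt | hbt
      · left; exact ⟨lt2 h (mem_Ln.1 ha).1 (mem_Ln.1 hc).1 hbt.1,
          lt2 h (mem_Ln.1 hc).1 (mem_Ln.1 hb).1 hbt.2⟩
      · right; exact ⟨lt2 h (mem_Ln.1 hb).1 (mem_Ln.1 hc).1 hbt.1,
          lt2 h (mem_Ln.1 hc).1 (mem_Ln.1 ha).1 hbt.2⟩
  · refine ⟨fun z => f (io z), g_inj h, fun a b c => rfl, ?_, ?_⟩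
    · by_cases hex : ∃ a ∈ Ln m p w σ, ∃ b ∈ Ln m p w σ, a ≠ b
      · obtain ⟨a, ha, b, hb, hab⟩ := hex
        have := h.nonvertical _ (io_mem (mem_Ln.1 ha).1) _ (io_mem (mem_Ln.1 hb).1)
          (io_inj.ne hab) (by
            obtain ⟨j, hj, hj2⟩ := Ln_diff hw ha hb
            intro he
            simp only [io, Int.cast_inj] at he
            have : j * w.1 = 0 := by omega
            have hj0 : j = 0 := (mul_eq_zero.1 this).resolve_right hw1
            apply hab
            ext
            · exact he
            · rw [hj2, hj0]; ring)
        rw [gridLine_eq hw ha hb hab, Finset.image_image] at this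
        exact this
      · apply horton_small
        refine Finset.card_image_le.trans (Finset.card_le_one.2 ?_)
        intro a ha b hb
        by_contra hab
        exact hex ⟨a, ha, b, hb, hab⟩
    · intro a ha c hc b hb hbt i j h1 h2 h3 h4
      have hne := bt_ne (k := fun z => f (io z)) hbt h1 h2 h3 h4
      apply ord_aux hw1 h1 h3 hne.1 hne.2
      rcases hbt with hbt | hbt
      · left; exact ⟨lt1 h (mem_Ln.1 ha).1 (mem_Ln.1 hc).1 hbt.1,
          lt1 h (mem_Ln.1 hc).1 (mem_Ln.1 hb).1 hbt.2⟩
      · right; exact ⟨lt1 h (mem_Ln.1 hb).1 (mem_Ln.1 hc).1 hbt.1,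
          lt1 h (mem_Ln.1 hc).1 (mem_Ln.1 ha).1 hbt.2⟩

def nrm (w : ℤ × ℤ) : ℕ := max w.1.natAbs w.2.natAbs

lemma div_sep {d : ℕ} {x y j w : ℤ} (hd : w.natAbs = d) (hd0 : 0 < d) (hx : 0 ≤ x) (hy : 0 ≤ y)
    (h : y = x + j * w) (he : x.toNat / d = y.toNat / d) : j = 0 := by
  by_contra hj
  have h1 : d ≤ (y - x).natAbs := by
    have : y - x = j * w := by linarith
    rw [this, Int.natAbs_mul, hd]
    exact Nat.le_mul_of_pos_left _ (by omega)
  have ex := Nat.div_add_mod x.toNat d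
  have ey := Nat.div_add_mod y.toNat d
  have lx := Nat.mod_lt x.toNat hd0
  have ly := Nat.mod_lt y.toNat hd0
  rw [he] at ex
  generalize d * (y.toNat / d) = q at *
  omega

lemma Ln_card {m : ℕ} {p w : ℤ × ℤ} {σ : ℤ} (hw : IsCoprime w.1 w.2) :
    (Ln m p w σ).card ≤ m / nrm w + 1 := by
  have hpos : 0 < nrm w := by
    by_contra h0
    have h1 : w.1 = 0 := by unfold nrm at h0; omega
    have h2 : w.2 = 0 := by unfold nrm at h0; omega
    rw [h1, h2] at hw; exact not_isCoprime_zero_zero hw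
  rw [← Finset.card_range (m / nrm w + 1)]
  rcases le_total w.1.natAbs w.2.natAbs with hle | hle
  · have hn : w.2.natAbs = nrm w := by unfold nrm; omega
    apply Finset.card_le_card_of_injOn (fun x => x.2.toNat / nrm w)
    · intro x hx
      have := mem_box.1 (mem_Ln.1 hx).1
      simp only [Finset.coe_range, Set.mem_Iio, Nat.lt_succ_iff]
      exact Nat.div_le_div_right (by omega)
    · intro x hx y hy hxy
      obtain ⟨j, h1, h2⟩ := Ln_diff hw hx hy
      have bx := mem_box.1 (mem_Ln.1 hx).1
      have b_y := mem_box.1 (mem_Ln.1 hy).1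
      have := div_sep hn hpos (by omega) (by omega) h2 hxy
      subst this
      ext <;> omega
  · have hn : w.1.natAbs = nrm w := by unfold nrm; omega
    apply Finset.card_le_card_of_injOn (fun x => x.1.toNat / nrm w)
    · intro x hx
      have := mem_box.1 (mem_Ln.1 hx).1
      simp only [Finset.coe_range, Set.mem_Iio, Nat.lt_succ_iff]
      exact Nat.div_le_div_right (by omega)
    · intro x hx y hy hxy
      obtain ⟨j, h1, h2⟩ := Ln_diff hw hx hy
      have bx := mem_box.1 (mem_Ln.1 hx).1
      have b_y := mem_box.1 (mem_Ln.1 hy).1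
      have := div_sep hn hpos (by omega) (by omega) h1 hxy
      subst this
      ext <;> omega

lemma vis_of_empty {m : ℕ} {ε : ℝ} {f : ℝ × ℝ → ℝ × ℝ} (h : IsSquaredHorton m ε f)
    {p w : ℤ × ℤ} {σ : ℤ} {k : ℤ × ℤ → ℝ × ℝ} (hw : IsCoprime w.1 w.2)
    (hk : LineMap m f p w σ k)
    {x y z : ℤ × ℤ} {τ : ℤ} (hx : x ∈ Ln m p w σ) (hy : y ∈ Ln m p w σ) (hz : z ∈ box m)
    (hxy : x ≠ y)
    (hτ : cr w (z - x) = τ) (hτ0 : τ ≠ 0)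
    (hE : ∀ c ∈ box m, ¬ RT (f (io x)) (f (io y)) (f (io z)) (f (io c))) :
    Vis ((Ln m p w σ).image k) (k x) (k y) := by
  obtain ⟨t, ht1, ht2⟩ := Ln_diff hw hx hy
  have ht : t ≠ 0 := by
    rintro rfl
    apply hxy; ext <;> omega
  have bx := (mem_Ln.1 hx).1
  have b_y := (mem_Ln.1 hy).1
  -- the position of a blocking point
  have pos : ∀ c ∈ Ln m p w σ, Bt3 (k x) (k c) (k y) →
      ∃ i : ℤ, idet y z c = (t - i) * τ ∧ idet z x c = i * τ ∧
        ((0 < i ∧ i < t) ∨ (t < i ∧ i < 0)) := by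
    intro c hc hb
    obtain ⟨i, hi1, hi2⟩ := Ln_diff hw hx hc
    refine ⟨i, ?_, ?_, hk.ord x hx c hc y hy hb i t hi1 hi2 ht1 ht2⟩
    · rw [← hτ]; unfold idet cr; rw [hi1, hi2, ht1, ht2]; simp; ring
    · rw [← hτ]; unfold idet cr; rw [hi1, hi2]; simp; ring
  rcases lt_or_gt_of_ne (mul_ne_zero ht hτ0) with hs | hs
  · right
    intro c' hc' hb
    obtain ⟨c, hc, rfl⟩ := Finset.mem_image.1 hc'
    obtain ⟨i, e1, e2, e3⟩ := pos c hc hb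
    by_contra hcon
    push Not at hcon
    rw [hk.ori] at hcon
    have bc := (mem_Ln.1 hc).1
    have s1 : (t - i) * τ < 0 ∧ i * τ < 0 := by
      rcases e3 with e3 | e3
      · have : τ < 0 := by nlinarith
        constructor <;> nlinarith
      · have : 0 < τ := by nlinarith
        constructor <;> nlinarith
    exact hE c bc (Or.inr ⟨hcon, g_neg h b_y hz bc (by omega), g_neg h hz bx bc (by omega)⟩)
  · left
    intro c' hc' hb
    obtain ⟨c, hc, rfl⟩ := Finset.mem_image.1 hc'
    obtain ⟨i, e1, e2, e3⟩ := pos c hc hb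
    by_contra hcon
    push Not at hcon
    rw [hk.ori] at hcon
    have bc := (mem_Ln.1 hc).1
    have s1 : 0 < (t - i) * τ ∧ 0 < i * τ := by
      rcases e3 with e3 | e3
      · have : 0 < τ := by nlinarith
        constructor <;> nlinarith
      · have : τ < 0 := by nlinarith
        constructor <;> nlinarith
    exact hE c bc (Or.inl ⟨hcon, g_pos h b_y hz bc (by omega), g_pos h hz bx bc (by omega)⟩)

def Good (m : ℕ) (f : ℝ × ℝ → ℝ × ℝ) (p : ℤ × ℤ) (ab : (ℤ × ℤ) × (ℤ × ℤ)) : Prop :=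
  ab.1 ≠ p ∧ ab.2 ≠ p ∧ ab.1 ≠ ab.2 ∧
    ∀ c ∈ box m, ¬ RT (f (io p)) (f (io ab.1)) (f (io ab.2)) (f (io c))

def KK (m : ℕ) (w : ℤ × ℤ) : ℕ := m / nrm w + 1

def LL (m : ℕ) (w : ℤ × ℤ) : ℕ := Nat.clog 2 (KK m w)

lemma RT_congr {k : ℤ × ℤ → ℝ × ℝ} {f : ℝ × ℝ → ℝ × ℝ}
    (ori : ∀ a b c, orient (k a) (k b) (k c) = orient (f (io a)) (f (io b)) (f (io c)))
    (a b c x : ℤ × ℤ) :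
    RT (k a) (k b) (k c) (k x) ↔ RT (f (io a)) (f (io b)) (f (io c)) (f (io x)) := by
  unfold RT; simp only [ori]

lemma image_card_le {m : ℕ} {p w : ℤ × ℤ} {σ : ℤ} (hw : IsCoprime w.1 w.2)
    (k : ℤ × ℤ → ℝ × ℝ) : ((Ln m p w σ).image k).card ≤ KK m w :=
  Finset.card_image_le.trans (Ln_card hw)

lemma image_clog_le {m : ℕ} {p w : ℤ × ℤ} {σ : ℤ} (hw : IsCoprime w.1 w.2)
    (k : ℤ × ℤ → ℝ × ℝ) : Nat.clog 2 ((Ln m p w σ).image k).card ≤ LL m w :=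
  Nat.clog_mono_right 2 (image_card_le hw k)

lemma cntA1 {m : ℕ} {ε : ℝ} {f : ℝ × ℝ → ℝ × ℝ} (h : IsSquaredHorton m ε f)
    {p w : ℤ × ℤ} (hw : IsCoprime w.1 w.2) (hp : p ∈ box m) :
    ((Ln m p w 0 ×ˢ Ln m p w 0).filter (Good m f p)).card ≤ 12 * (KK m w * LL m w) := by
  obtain ⟨k, hk⟩ := exists_lineMap h p w 0 hw
  have hpL : p ∈ Ln m p w 0 := mem_Ln.2 ⟨hp, by simp [cr]⟩
  have h1 := horton_tri hk.horton (k p) (Finset.mem_image_of_mem _ hpL)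
  have h2 : ((Ln m p w 0 ×ˢ Ln m p w 0).filter (Good m f p)).card ≤
      (triSet ((Ln m p w 0).image k) (k p)).card := by
    apply Finset.card_le_card_of_injOn (fun ab => (k ab.1, k ab.2))
    · rintro ⟨a, b⟩ hab
      simp only [Finset.coe_filter, Finset.mem_product, Set.mem_ofPred_eq, Good] at hab
      obtain ⟨⟨ha, hb⟩, hap, hbp, hne, hE⟩ := hab
      have ba := (mem_Ln.1 ha).1
      have bb := (mem_Ln.1 hb).1
      simp only [triSet, Finset.coe_filter, Finset.mem_product, Set.mem_ofPred_eq]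
      refine ⟨⟨Finset.mem_image_of_mem _ ha, Finset.mem_image_of_mem _ hb⟩,
        fun e => hap (hk.inj ba hp e), fun e => hbp (hk.inj bb hp e),
        fun e => hne (hk.inj ba bb e), ?_⟩
      intro c hc
      obtain ⟨c, hc', rfl⟩ := Finset.mem_image.1 hc
      rw [RT_congr hk.ori]
      exact hE c (mem_Ln.1 hc').1
    · rintro ⟨a, b⟩ hab ⟨a', b'⟩ hab' he
      simp only [Finset.coe_filter, Finset.mem_product, Set.mem_ofPred_eq] at hab hab'
      simp only [Prod.mk.injEq] at he ⊢
      exact ⟨hk.inj (mem_Ln.1 hab.1.1).1 (mem_Ln.1 hab'.1.1).1 he.1,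
        hk.inj (mem_Ln.1 hab.1.2).1 (mem_Ln.1 hab'.1.2).1 he.2⟩
  refine h2.trans (h1.trans ?_)
  exact Nat.mul_le_mul_left _ (Nat.mul_le_mul (image_card_le hw k) (image_clog_le hw k))

lemma cntVis {m : ℕ} {f : ℝ × ℝ → ℝ × ℝ}
    {p w x : ℤ × ℤ} {σ : ℤ} {k : ℤ × ℤ → ℝ × ℝ} (hw : IsCoprime w.1 w.2)
    (hk : LineMap m f p w σ k) (hx : x ∈ Ln m p w σ) :
    ((Ln m p w σ).filter fun y => y ≠ x ∧ Vis ((Ln m p w σ).image k) (k x) (k y)).card ≤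
      2 * LL m w := by
  have h1 := horton_vis hk.horton (k x) (Finset.mem_image_of_mem _ hx)
  refine le_trans ?_ (h1.trans (Nat.mul_le_mul_left _ (image_clog_le hw k)))
  apply Finset.card_le_card_of_injOn k
  · intro y hy
    simp only [Finset.coe_filter, Set.mem_ofPred_eq] at hy ⊢
    exact ⟨Finset.mem_image_of_mem _ hy.1,
      fun e => hy.2.1 (hk.inj (mem_Ln.1 hy.1).1 (mem_Ln.1 hx).1 e), hy.2.2⟩
  · intro y hy z hz e
    simp only [Finset.coe_filter, Set.mem_ofPred_eq] at hy hz
    exact hk.inj (mem_Ln.1 hy.1).1 (mem_Ln.1 hz.1).1 e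

def setA (m : ℕ) (f : ℝ × ℝ → ℝ × ℝ) (p w : ℤ × ℤ) : Finset ((ℤ × ℤ) × (ℤ × ℤ)) :=
  (Ln m p w 0 ×ˢ (Ln m p w 1 ∪ Ln m p w (-1))).filter (Good m f p)

lemma two_lines {m : ℕ} {p w : ℤ × ℤ} (hw : IsCoprime w.1 w.2) (σ τ : ℤ) :
    (Ln m p w σ ∪ Ln m p w τ).card ≤ 2 * KK m w := by
  have h1 := Finset.card_union_le (Ln m p w σ) (Ln m p w τ)
  have h2 := Ln_card (m := m) (p := p) (σ := σ) hw
  have h3 := Ln_card (m := m) (p := p) (σ := τ) hw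
  unfold KK; omega

lemma cntA {m : ℕ} {ε : ℝ} {f : ℝ × ℝ → ℝ × ℝ} (h : IsSquaredHorton m ε f)
    {p w : ℤ × ℤ} (hw : IsCoprime w.1 w.2) (hp : p ∈ box m) :
    (setA m f p w).card ≤ 4 * (KK m w * LL m w) := by
  obtain ⟨k, hk⟩ := exists_lineMap h p w 0 hw
  have hpL : p ∈ Ln m p w 0 := mem_Ln.2 ⟨hp, by simp [cr]⟩
  have h1 := cntVis hw hk hpL
  have hsub : setA m f p w ⊆
      ((Ln m p w 0).filter fun y => y ≠ p ∧ Vis ((Ln m p w 0).image k) (k p) (k y)) ×ˢ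
      (Ln m p w 1 ∪ Ln m p w (-1)) := by
    rintro ⟨a, b⟩ hab
    simp only [setA, Finset.mem_filter, Finset.mem_product, Good] at hab ⊢
    obtain ⟨⟨ha, hb⟩, hap, hbp, hne, hE⟩ := hab
    refine ⟨⟨ha, hap, ?_⟩, hb⟩
    have hb' : b ∈ box m ∧ cr w (b - p) ≠ 0 := by
      rcases Finset.mem_union.1 hb with hb | hb
      · rw [mem_Ln] at hb; exact ⟨hb.1, by omega⟩
      · rw [mem_Ln] at hb; exact ⟨hb.1, by omega⟩
    exact vis_of_empty h hw hk hpL ha hb'.1 (Ne.symm hap) rfl hb'.2 hE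
  refine (Finset.card_le_card hsub).trans ?_
  rw [Finset.card_product]
  refine (Nat.mul_le_mul h1 (two_lines hw 1 (-1))).trans (le_of_eq ?_)
  ring

def setB (m : ℕ) (p w : ℤ × ℤ) : Finset ((ℤ × ℤ) × (ℤ × ℤ)) :=
  {(p.1 + 2 * w.1, p.2 + 2 * w.2)} ×ˢ (Ln m p w 2 ∪ Ln m p w (-2))

lemma cntB {m : ℕ} {p w : ℤ × ℤ} (hw : IsCoprime w.1 w.2) :
    (setB m p w).card ≤ 2 * KK m w := by
  unfold setB
  rw [Finset.card_product, Finset.card_singleton, one_mul]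
  exact two_lines hw _ _

def setC (m : ℕ) (f : ℝ × ℝ → ℝ × ℝ) (p w : ℤ × ℤ) (σ : ℤ) : Finset ((ℤ × ℤ) × (ℤ × ℤ)) :=
  (Ln m p w σ ×ˢ Ln m p w σ).filter (Good m f p)

lemma cntC {m : ℕ} {ε : ℝ} {f : ℝ × ℝ → ℝ × ℝ} (h : IsSquaredHorton m ε f)
    {p w : ℤ × ℤ} {σ : ℤ} (hσ : σ ≠ 0) (hw : IsCoprime w.1 w.2) (hp : p ∈ box m) :
    (setC m f p w σ).card ≤ 2 * (KK m w * LL m w) := by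
  obtain ⟨k, hk⟩ := exists_lineMap h p w σ hw
  have hsub : setC m f p w σ ⊆ (Ln m p w σ).biUnion fun a =>
      ((Ln m p w σ).filter fun y => y ≠ a ∧ Vis ((Ln m p w σ).image k) (k a) (k y)).image
        fun b => (a, b) := by
    rintro ⟨a, b⟩ hab
    simp only [setC, Finset.mem_filter, Finset.mem_product, Good] at hab
    obtain ⟨⟨ha, hb⟩, hap, hbp, hne, hE⟩ := hab
    simp only [Finset.mem_biUnion, Finset.mem_image, Finset.mem_filter]
    refine ⟨a, ha, b, ⟨hb, hne.symm, ?_⟩, rfl⟩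
    have e : cr w (p - a) = -σ := by
      rw [← (mem_Ln.1 ha).2]; simp [cr]; ring
    refine vis_of_empty h hw hk ha hb hp hne e (by omega) ?_
    intro c hc hr
    exact hE c hc (RT_rot (RT_rot hr))
  refine (Finset.card_le_card hsub).trans ?_
  refine (Finset.card_biUnion_le_card_mul _ _ (2 * LL m w) ?_).trans ?_
  · intro a ha
    exact Finset.card_image_le.trans (cntVis hw hk ha)
  · refine (Nat.mul_le_mul_right _ (Ln_card hw)).trans (le_of_eq ?_)
    unfold KK; ring

def WW (m : ℕ) : Finset (ℤ × ℤ) :=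
  (Finset.Icc (-(m : ℤ)) m ×ˢ Finset.Icc (-(m : ℤ)) m).filter fun w => IsCoprime w.1 w.2

lemma mem_WW {m : ℕ} {a b w : ℤ × ℤ} {t : ℤ} (ha : a ∈ box m) (hb : b ∈ box m)
    (hw : IsCoprime w.1 w.2) (ht : t ≠ 0) (h1 : b.1 = a.1 + t * w.1) (h2 : b.2 = a.2 + t * w.2) :
    w ∈ WW m := by
  rw [mem_box] at ha hb
  have key : ∀ x y z : ℤ, 1 ≤ x → x ≤ m → 1 ≤ y → y ≤ m → y = x + t * z → -(m : ℤ) ≤ z ∧ z ≤ m := by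
    intro x y z g1 g2 g3 g4 e
    have : z.natAbs ≤ (y - x).natAbs := by
      have : y - x = t * z := by linarith
      rw [this, Int.natAbs_mul]
      exact Nat.le_mul_of_pos_left _ (by omega)
    omega
  simp only [WW, Finset.mem_filter, Finset.mem_product, Finset.mem_Icc]
  exact ⟨⟨key _ _ _ ha.1.1 ha.1.2 hb.1.1 hb.1.2 h1, key _ _ _ ha.2.1 ha.2.2 hb.2.1 hb.2.2 h2⟩, hw⟩

def setN (m : ℕ) (f : ℝ × ℝ → ℝ × ℝ) (p w : ℤ × ℤ) : Finset ((ℤ × ℤ) × (ℤ × ℤ)) :=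
  (setA m f p w ∪ setB m p w) ∪ (setC m f p w 1 ∪ setC m f p w (-1))

def setW (m : ℕ) (f : ℝ × ℝ → ℝ × ℝ) (p w : ℤ × ℤ) : Finset ((ℤ × ℤ) × (ℤ × ℤ)) :=
  ((Ln m p w 0 ×ˢ Ln m p w 0).filter (Good m f p)) ∪
    (setN m f p w ∪ (setN m f p w).image Prod.swap)

lemma cntN {m : ℕ} {ε : ℝ} {f : ℝ × ℝ → ℝ × ℝ} (h : IsSquaredHorton m ε f)
    {p w : ℤ × ℤ} (hw : IsCoprime w.1 w.2) (hp : p ∈ box m) :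
    (setN m f p w).card ≤ 8 * (KK m w * LL m w) + 2 * KK m w := by
  unfold setN
  have t1 := Finset.card_union_le (setA m f p w ∪ setB m p w) (setC m f p w 1 ∪ setC m f p w (-1))
  have t2 := Finset.card_union_le (setA m f p w) (setB m p w)
  have t3 := Finset.card_union_le (setC m f p w 1) (setC m f p w (-1))
  have c1 := cntA h hw hp
  have c2 := cntB (m := m) (p := p) hw
  have c3 := cntC h (σ := 1) (by norm_num) hw hp
  have c4 := cntC h (σ := -1) (by norm_num) hw hp
  omega

lemma cntW {m : ℕ} {ε : ℝ} {f : ℝ × ℝ → ℝ × ℝ} (h : IsSquaredHorton m ε f)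
    {p w : ℤ × ℤ} (hw : IsCoprime w.1 w.2) (hp : p ∈ box m) :
    (setW m f p w).card ≤ 28 * (KK m w * LL m w) + 4 * KK m w := by
  unfold setW
  have t1 := Finset.card_union_le ((Ln m p w 0 ×ˢ Ln m p w 0).filter (Good m f p))
    (setN m f p w ∪ (setN m f p w).image Prod.swap)
  have t2 := Finset.card_union_le (setN m f p w) ((setN m f p w).image Prod.swap)
  have t3 : ((setN m f p w).image Prod.swap).card ≤ _ := Finset.card_image_le
  have c1 := cntN h hw hp
  have c2 := cntA1 h hw hp
  omega

lemma Good.swap {m : ℕ} {f : ℝ × ℝ → ℝ × ℝ} {p a b : ℤ × ℤ} (h : Good m f p (a, b)) :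
    Good m f p (b, a) := by
  obtain ⟨h1, h2, h3, h4⟩ := h
  exact ⟨h2, h1, Ne.symm h3, fun c hc hr => h4 c hc (RT_rot (RT_swap hr))⟩

lemma good_cls {m : ℕ} {f : ℝ × ℝ → ℝ × ℝ}
    {p a b : ℤ × ℤ} (hp : p ∈ box m) (ha : a ∈ box m) (hb : b ∈ box m) (hG : Good m f p (a, b))
    (hc : ClsA p a b ∨ ClsB p a b ∨ ClsC p a b) : ∃ w ∈ WW m, (a, b) ∈ setN m f p w := by
  rcases hc with ⟨w, hw, ⟨t, ht, h1, h2⟩, hd⟩ | ⟨w, hw, ⟨h1, h2⟩, hd⟩ | ⟨w, hw, ⟨t, ht, h1, h2⟩, hd⟩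
  · refine ⟨w, mem_WW hp ha hw (by omega) h1 h2, ?_⟩
    simp only [setN, Finset.mem_union]
    left; left
    simp only [setA, Finset.mem_filter, Finset.mem_product, Finset.mem_union, mem_Ln]
    refine ⟨⟨⟨ha, ?_⟩, ?_⟩, hG⟩
    · simp [cr, h1, h2]; ring
    · rcases hd with hd | hd
      · exact Or.inl ⟨hb, hd⟩
      · exact Or.inr ⟨hb, hd⟩
  · refine ⟨w, mem_WW hp ha hw (t := 2) (by omega) h1 h2, ?_⟩
    simp only [setN, Finset.mem_union]
    left; right
    simp only [setB, Finset.mem_product, Finset.mem_union, mem_Ln, Finset.mem_singleton]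
    refine ⟨Prod.ext h1 h2, ?_⟩
    rcases hd with hd | hd
    · exact Or.inl ⟨hb, hd⟩
    · exact Or.inr ⟨hb, hd⟩
  · refine ⟨w, mem_WW ha hb hw ht h1 h2, ?_⟩
    simp only [setN, Finset.mem_union]
    right
    have e : cr w (b - p) = cr w (a - p) := by simp [cr, h1, h2]; ring
    simp only [setC, Finset.mem_filter, Finset.mem_product, mem_Ln]
    rcases hd with hd | hd
    · left; exact ⟨⟨⟨ha, hd⟩, ⟨hb, by rw [e, hd]⟩⟩, hG⟩
    · right; exact ⟨⟨⟨ha, hd⟩, ⟨hb, by rw [e, hd]⟩⟩, hG⟩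

lemma good_cover {m : ℕ} {ε : ℝ} {f : ℝ × ℝ → ℝ × ℝ} (h : IsSquaredHorton m ε f)
    {p : ℤ × ℤ} (hp : p ∈ box m) :
    (box m ×ˢ box m).filter (Good m f p) ⊆ (WW m).biUnion (setW m f p) := by
  rintro ⟨a, b⟩ hab
  simp only [Finset.mem_filter, Finset.mem_product] at hab
  obtain ⟨⟨ha, hb⟩, hG⟩ := hab
  simp only [Finset.mem_biUnion, setW]
  by_cases hd : idet p a b = 0
  · obtain ⟨s, w, hs, hw, h1, h2⟩ := prim_dec (d := a - p) (sub_ne_zero.2 hG.1)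
    simp only [Prod.fst_sub, Prod.snd_sub] at h1 h2
    refine ⟨w, mem_WW hp ha hw (t := s) (by omega) (by linarith) (by linarith), ?_⟩
    rw [Finset.mem_union]
    left
    simp only [Finset.mem_filter, Finset.mem_product, mem_Ln]
    refine ⟨⟨⟨ha, ?_⟩, ⟨hb, ?_⟩⟩, hG⟩
    · simp [cr, h1, h2]; ring
    · unfold idet at hd
      rw [h1, h2] at hd
      have : s * cr w (b - p) = 0 := by
        simp only [cr, Prod.fst_sub, Prod.snd_sub]; linarith
      exact (mul_eq_zero.1 this).resolve_left (by omega)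
  · have hE : ∀ x ∈ box m, ¬ IT p a b x := by
      intro x hx hi
      apply hG.2.2.2 x hx
      rcases hi with ⟨h1, h2, h3⟩ | ⟨h1, h2, h3⟩
      · exact Or.inl ⟨g_pos h hp ha hx h1, g_pos h ha hb hx h2, g_pos h hb hp hx h3⟩
      · exact Or.inr ⟨g_neg h hp ha hx h1, g_neg h ha hb hx h2, g_neg h hb hp hx h3⟩
    rcases classify hp ha hb hd hE with hc | hc
    · obtain ⟨w, hw, hN⟩ := good_cls hp ha hb hG hc
      exact ⟨w, hw, Finset.mem_union_right _ (Finset.mem_union_left _ hN)⟩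
    · obtain ⟨w, hw, hN⟩ := good_cls hp hb ha hG.swap hc
      refine ⟨w, hw, Finset.mem_union_right _ (Finset.mem_union_right _ ?_)⟩
      exact Finset.mem_image.2 ⟨(b, a), hN, rfl⟩

lemma good_card {m : ℕ} {ε : ℝ} {f : ℝ × ℝ → ℝ × ℝ} (h : IsSquaredHorton m ε f)
    {p : ℤ × ℤ} (hp : p ∈ box m) :
    ((box m ×ˢ box m).filter (Good m f p)).card ≤
      ∑ w ∈ WW m, (28 * (KK m w * LL m w) + 4 * KK m w) := by
  refine (Finset.card_le_card (good_cover h hp)).trans (Finset.card_biUnion_le.trans ?_)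
  apply Finset.sum_le_sum
  intro w hw
  exact cntW h (Finset.mem_filter.1 hw).2 hp

lemma RT_interior {a b c x : ℝ × ℝ} (h : RT a b c x) :
    x ∈ interior (convexHull ℝ ({a, b, c} : Set (ℝ × ℝ))) := by
  have main : ∀ a b c x : ℝ × ℝ, (0 < orient a b x ∧ 0 < orient b c x ∧ 0 < orient c a x) →
      x ∈ interior (convexHull ℝ ({a, b, c} : Set (ℝ × ℝ))) := by
    intro a b c x hx
    have hopen : IsOpen {y : ℝ × ℝ | 0 < orient a b y ∧ 0 < orient b c y ∧ 0 < orient c a y} := by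
      have hc : ∀ a b : ℝ × ℝ, Continuous fun y => orient a b y := by
        intro a b; unfold orient; fun_prop
      exact (isOpen_lt continuous_const (hc a b)).inter
        ((isOpen_lt continuous_const (hc b c)).inter (isOpen_lt continuous_const (hc c a)))
    refine interior_maximal ?_ hopen hx
    rintro y ⟨h1, h2, h3⟩
    set S := orient a b y + orient b c y + orient c a y with hS
    have hSp : 0 < S := by positivity
    have hy : y = (orient b c y / S) • a + (orient c a y / S) • b + (orient a b y / S) • c := by
      ext
      · simp only [Prod.fst_add, Prod.smul_fst, smul_eq_mul]
        field_simp
        rw [hS]; unfold orient; ring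
      · simp only [Prod.snd_add, Prod.smul_snd, smul_eq_mul]
        field_simp
        rw [hS]; unfold orient; ring
    rw [hy]
    have := (convex_convexHull ℝ ({a, b, c} : Set (ℝ × ℝ))).sum_mem (t := Finset.univ)
      (w := ![orient b c y / S, orient c a y / S, orient a b y / S]) (z := ![a, b, c])
      (by intro i _; fin_cases i <;> simp <;> positivity)
      (by simp [Fin.sum_univ_three]; field_simp; rw [hS]; ring)
      (by intro i _; apply subset_convexHull; fin_cases i <;> simp)
    simpa [Fin.sum_univ_three] using this
  rcases h with h | h
  · exact main a b c x h
  · have := main b a c x ⟨by rw [orient_swap]; linarith, by rw [orient_swap]; linarith,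
      by rw [orient_swap]; linarith⟩
    rwa [Set.insert_comm] at this

lemma incident_le {m : ℕ} {ε : ℝ} {f : ℝ × ℝ → ℝ × ℝ} (h : IsSquaredHorton m ε f)
    {p : ℤ × ℤ} (hp : p ∈ box m) :
    incidentCount ↑((grid m).image f) (f (io p)) ≤
      ((box m ×ˢ box m).filter (Good m f p)).card := by
  unfold incidentCount
  have hsub : {t : Finset (ℝ × ℝ) | IsEmptyTriangleOf ↑((grid m).image f) t ∧ f (io p) ∈ t} ⊆
      ↑(((box m ×ˢ box m).filter (Good m f p)).image
        fun ab => ({f (io p), f (io ab.1), f (io ab.2)} : Finset (ℝ × ℝ))) := by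
    rintro t ⟨⟨hcard, hS, -, hE⟩, hq⟩
    have hmem : ∀ y ∈ t, ∃ z ∈ box m, f (io z) = y := by
      intro y hy
      have := hS hy
      rw [grid_eq, Finset.image_image] at this
      simpa using this
    have : ∃ y z, y ≠ f (io p) ∧ z ≠ f (io p) ∧ y ≠ z ∧ t = {f (io p), y, z} := by
      have h2 : (t.erase (f (io p))).card = 2 := by rw [Finset.card_erase_of_mem hq, hcard]
      obtain ⟨y, z, hyz, he⟩ := Finset.card_eq_two.1 h2
      have hy : y ∈ t.erase (f (io p)) := by rw [he]; simp
      have hz : z ∈ t.erase (f (io p)) := by rw [he]; simp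
      refine ⟨y, z, (Finset.mem_erase.1 hy).1, (Finset.mem_erase.1 hz).1, hyz, ?_⟩
      rw [← he, Finset.insert_erase hq]
    obtain ⟨y, z, hy, hz, hyz, rfl⟩ := this
    obtain ⟨a, ha, rfl⟩ := hmem y (by simp)
    obtain ⟨b, hb, rfl⟩ := hmem z (by simp)
    simp only [Finset.coe_image, Set.mem_image, Finset.mem_coe, Finset.mem_filter,
      Finset.mem_product]
    refine ⟨(a, b), ⟨⟨ha, hb⟩, ?_, ?_, ?_, ?_⟩, rfl⟩
    · rintro rfl; exact hy rfl
    · rintro rfl; exact hz rfl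
    · intro e; exact hyz (congrArg (fun z => f (io z)) e)
    · intro c hc hr
      apply hE (f (io c))
      · simp only [Finset.coe_image]
        exact ⟨io c, io_mem hc, rfl⟩
      · have := RT_interior hr
        simpa using this
  refine (Set.ncard_le_ncard hsub (Finset.finite_toSet _)).trans ?_
  rw [Set.ncard_coe_finset]
  exact Finset.card_image_le

lemma sq_le_two_pow (n : ℕ) : (n + 1) ^ 2 ≤ 8 * 2 ^ n := by
  induction n with
  | zero => norm_num
  | succ n ih =>
    rcases Nat.lt_or_ge n 2 with h | h
    · interval_cases n <;> norm_num
    · rw [pow_succ 2 n]; nlinarith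

lemma clog_sq {K : ℕ} (hK : 2 ≤ K) : (Nat.clog 2 K) ^ 2 ≤ 8 * K := by
  have h1 : 0 < Nat.clog 2 K := Nat.clog_pos (by norm_num) hK
  obtain ⟨n, hn⟩ : ∃ n, Nat.clog 2 K = n + 1 := ⟨Nat.clog 2 K - 1, by omega⟩
  have h2 : 2 ^ n < K := by
    have := Nat.pow_pred_clog_lt_self (b := 2) (by norm_num) (x := K) (by omega)
    rw [hn] at this
    simpa using this
  have := sq_le_two_pow n
  rw [hn]
  omega

lemma term_le {m : ℕ} {w : ℤ × ℤ} (h1 : 1 ≤ nrm w) (h2 : nrm w ≤ m) :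
    ((28 * (KK m w * LL m w) + 4 * KK m w : ℕ) : ℝ) ≤
      384 * (m / nrm w) * (Real.sqrt m * (1 / Real.sqrt (nrm w))) := by
  have hK : 2 ≤ KK m w := by
    have : 1 ≤ m / nrm w := (Nat.one_le_div_iff (by omega)).2 h2
    unfold KK; omega
  have hL : 1 ≤ LL m w := Nat.clog_pos (by norm_num) hK
  have hL2 : (LL m w) ^ 2 ≤ 8 * KK m w := clog_sq hK
  have hd : (0 : ℝ) < nrm w := by exact_mod_cast h1
  have hm : (nrm w : ℝ) ≤ m := by exact_mod_cast h2
  have hKr : (KK m w : ℝ) ≤ 2 * (m / nrm w) := by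
    have e1 : ((m / nrm w : ℕ) : ℝ) ≤ (m : ℝ) / nrm w := Nat.cast_div_le
    have e2 : (1 : ℝ) ≤ (m : ℝ) / nrm w := (one_le_div hd).2 hm
    unfold KK; push_cast; linarith
  set x : ℝ := (m : ℝ) / nrm w with hx
  have hx0 : 0 ≤ x := by positivity
  have hsq : Real.sqrt m * (1 / Real.sqrt (nrm w)) = Real.sqrt x := by
    rw [hx, Real.sqrt_div (by positivity)]; ring
  rw [hsq]
  have hLr : (LL m w : ℝ) ≤ 4 * Real.sqrt x := by
    have e : ((LL m w : ℝ)) ^ 2 ≤ 8 * KK m w := by exact_mod_cast hL2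
    apply le_of_sq_le_sq _ (by positivity)
    rw [mul_pow, Real.sq_sqrt hx0]
    linarith
  have hLr1 : (1 : ℝ) ≤ LL m w := by exact_mod_cast hL
  push_cast
  have hK0 : (0 : ℝ) ≤ KK m w := by positivity
  have s1 : (KK m w : ℝ) ≤ KK m w * LL m w := le_mul_of_one_le_right hK0 hLr1
  have s2 : (KK m w : ℝ) * LL m w ≤ (2 * x) * (4 * Real.sqrt x) :=
    mul_le_mul hKr hLr (by positivity) (by positivity)
  nlinarith [mul_nonneg hx0 (Real.sqrt_nonneg x)]

lemma sum_inv_sqrt (m : ℕ) :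
    ∑ d ∈ Finset.Icc 1 m, 1 / Real.sqrt d ≤ 2 * Real.sqrt m := by
  induction m with
  | zero => simp
  | succ n ih =>
    rw [Finset.sum_Icc_succ_top (by omega)]
    have h : 1 / Real.sqrt ((n + 1 : ℕ) : ℝ) ≤
        2 * Real.sqrt ((n + 1 : ℕ) : ℝ) - 2 * Real.sqrt (n : ℝ) := by
      have hb : 0 < Real.sqrt ((n + 1 : ℕ) : ℝ) := Real.sqrt_pos.2 (by positivity)
      have ha : 0 ≤ Real.sqrt (n : ℝ) := Real.sqrt_nonneg _
      have eb : Real.sqrt ((n + 1 : ℕ) : ℝ) ^ 2 = n + 1 := by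
        rw [Real.sq_sqrt (by positivity)]; push_cast; ring
      have ea : Real.sqrt (n : ℝ) ^ 2 = n := Real.sq_sqrt (by positivity)
      rw [div_le_iff₀ hb]
      nlinarith [sq_nonneg (Real.sqrt ((n + 1 : ℕ) : ℝ) - Real.sqrt (n : ℝ))]
    linarith

lemma fiber_card (m d : ℕ) (hd : 1 ≤ d) : ((WW m).filter fun w => nrm w = d).card ≤ 12 * d := by
  have hsub : ((WW m).filter fun w => nrm w = d) ⊆
      (({-(d : ℤ), (d : ℤ)} : Finset ℤ) ×ˢ Finset.Icc (-(d : ℤ)) d) ∪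
      (Finset.Icc (-(d : ℤ)) d ×ˢ ({-(d : ℤ), (d : ℤ)} : Finset ℤ)) := by
    rintro ⟨x, y⟩ hw
    have h := (Finset.mem_filter.1 hw).2
    simp only [nrm] at h
    simp only [Finset.mem_union, Finset.mem_product, Finset.mem_insert, Finset.mem_singleton,
      Finset.mem_Icc]
    omega
  refine (Finset.card_le_card hsub).trans ((Finset.card_union_le _ _).trans ?_)
  rw [Finset.card_product, Finset.card_product, Int.card_Icc]
  have h2 : ({-(d : ℤ), (d : ℤ)} : Finset ℤ).card ≤ 2 := Finset.card_le_two
  have h3 : ((d : ℤ) + 1 - -(d : ℤ)).toNat = 2 * d + 1 := by omega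
  rw [h3]
  nlinarith

lemma nrm_mem {m : ℕ} {w : ℤ × ℤ} (hw : w ∈ WW m) : nrm w ∈ Finset.Icc 1 m := by
  simp only [WW, Finset.mem_filter, Finset.mem_product, Finset.mem_Icc] at hw ⊢
  obtain ⟨h, hc⟩ := hw
  constructor
  · by_contra h0
    have h1 : w.1 = 0 := by unfold nrm at h0; omega
    have h2 : w.2 = 0 := by unfold nrm at h0; omega
    rw [h1, h2] at hc; exact not_isCoprime_zero_zero hc
  · unfold nrm; omega

lemma total_le (m : ℕ) :
    ((∑ w ∈ WW m, (28 * (KK m w * LL m w) + 4 * KK m w) : ℕ) : ℝ) ≤ 9216 * (m : ℝ) ^ 2 := by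
  rw [← Finset.sum_fiberwise_of_maps_to (fun w hw => nrm_mem hw), Nat.cast_sum]
  have key : ∀ d ∈ Finset.Icc 1 m,
      ((∑ w ∈ (WW m).filter fun w => nrm w = d, (28 * (KK m w * LL m w) + 4 * KK m w) : ℕ) : ℝ) ≤
      4608 * m * Real.sqrt m * (1 / Real.sqrt d) := by
    intro d hd
    rw [Finset.mem_Icc] at hd
    have hd0 : (0 : ℝ) < d := by exact_mod_cast hd.1
    rw [Nat.cast_sum]
    have t : ∀ w ∈ (WW m).filter fun w => nrm w = d,
        ((28 * (KK m w * LL m w) + 4 * KK m w : ℕ) : ℝ) ≤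
        384 * (m / d) * (Real.sqrt m * (1 / Real.sqrt d)) := by
      intro w hw
      have e := (Finset.mem_filter.1 hw).2
      have := term_le (m := m) (w := w) (by omega) (by omega)
      rw [e] at this
      exact this
    refine (Finset.sum_le_card_nsmul _ _ _ t).trans ?_
    rw [nsmul_eq_mul]
    have hc : (((WW m).filter fun w => nrm w = d).card : ℝ) ≤ 12 * d := by
      exact_mod_cast fiber_card m d hd.1
    refine (mul_le_mul_of_nonneg_right hc (by positivity)).trans (le_of_eq ?_)
    field_simp
    ring
  refine (Finset.sum_le_sum key).trans ?_
  rw [← Finset.mul_sum]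
  refine (mul_le_mul_of_nonneg_left (sum_inv_sqrt m) (by positivity)).trans (le_of_eq ?_)
  have : Real.sqrt m * Real.sqrt m = m := Real.mul_self_sqrt (by positivity)
  linear_combination (9216 * (m : ℝ)) * this

/-- Every point of a squared Horton set of `n = m²` points is a vertex of `O(n)` empty
triangles. -/
theorem squared_horton_incident_bound :
    ∃ C : ℝ, 0 < C ∧ ∀ (m : ℕ) (ε : ℝ) (f : ℝ × ℝ → ℝ × ℝ),
      IsSquaredHorton m ε f → ∀ q ∈ (grid m).image f,
        (incidentCount ↑((grid m).image f) q : ℝ) ≤ C * (m : ℝ) ^ 2 := by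
  refine ⟨9216, by norm_num, ?_⟩
  intro m ε f h q hq
  obtain ⟨x, hx, rfl⟩ := Finset.mem_image.1 hq
  rw [grid_eq] at hx
  obtain ⟨p, hp, rfl⟩ := Finset.mem_image.1 hx
  refine le_trans ?_ (total_le m)
  exact_mod_cast (incident_le h hp).trans (good_card h hp)
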